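/- For every integer n ≥ 3 and every integer d ≥ 2, there exists an elastic collision system of n unit balls in ℝ^d on the time interval ℝ whose number of collisions is strictly greater than n(n−1)/2. (Hence K(n,d) > n(n−1)/2.) -/

import Mathlib

open scoped RealInnerProductSpace

noncomputable section

/-- An elastic collision system of unit balls in `ℝ^d`, indexed by `ι`, on the time
interval `I ⊆ ℝ`.  `x i` is the trajectory of the center of ball `i`, `vr i t` its right
derivative (velocity) at time `t` and `vl i t` its left derivative (which, for a
continuous piecewise linear trajectory, is the left limit of the right derivative).
Fields `right_lin` and `left_lin` say that each trajectory is (locally) linear to the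
right and to the left of every time, with the indicated one-sided derivatives; this
encodes continuity and piecewise linearity with locally finitely many breakpoints.
`dist_ge` says the closed unit balls have disjoint interiors, and `collision_rule` is
the elastic collision rule: whenever the right derivative of `x i` changes at a time `t`
(having a left limit in `I`), there is exactly one `j ≠ i` with `‖x i t - x j t‖ = 2`,
the velocity of `x j` also changes at `t`, no other velocity changes at `t`, and with
`u = (x i t - x j t)/2` the usual exchange of normal velocity components holds. -/
structure BallSystem (ι : Type) (d : ℕ) (I : Set ℝ) where
  x : ι → ℝ → EuclideanSpace ℝ (Fin d)
  vr : ι → ℝ → EuclideanSpace ℝ (Fin d)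
  vl : ι → ℝ → EuclideanSpace ℝ (Fin d)
  right_lin : ∀ i, ∀ t ∈ I, ∃ ε > 0, ∀ s ∈ Set.Icc t (t + ε) ∩ I,
    x i s = x i t + (s - t) • vr i t
  left_lin : ∀ i, ∀ t ∈ I, ∃ ε > 0, ∀ s ∈ Set.Icc (t - ε) t ∩ I,
    x i s = x i t + (s - t) • vl i t
  dist_ge : ∀ i j, i ≠ j → ∀ t ∈ I, 2 ≤ ‖x i t - x j t‖
  collision_rule : ∀ i, ∀ t ∈ I, (∃ s ∈ I, s < t) → vr i t ≠ vl i t →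
    ∃ j, j ≠ i ∧ ‖x i t - x j t‖ = 2 ∧ vr j t ≠ vl j t ∧
      (∀ k, k ≠ i → ‖x i t - x k t‖ = 2 → k = j) ∧
      (∀ k, k ≠ i → k ≠ j → vr k t = vl k t) ∧
      vr i t = vl i t -
        ⟪vl i t - vl j t, (2⁻¹ : ℝ) • (x i t - x j t)⟫ • ((2⁻¹ : ℝ) • (x i t - x j t)) ∧
      vr j t = vl j t +
        ⟪vl i t - vl j t, (2⁻¹ : ℝ) • (x i t - x j t)⟫ • ((2⁻¹ : ℝ) • (x i t - x j t))

/-- The set of collisions of the system: pairs `(t, {i,j})` such that at time `t` the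
balls `i` and `j` are tangent and both of their velocities change at `t`. -/
def BallSystem.collisions {ι : Type} [DecidableEq ι] {d : ℕ} {I : Set ℝ}
    (S : BallSystem ι d I) : Set (ℝ × Finset ι) :=
  {p | p.1 ∈ I ∧ (∃ s ∈ I, s < p.1) ∧ ∃ i j : ι, i ≠ j ∧ p.2 = {i, j} ∧
    ‖S.x i p.1 - S.x j p.1‖ = 2 ∧ S.vr i p.1 ≠ S.vl i p.1 ∧ S.vr j p.1 ≠ S.vl j p.1}

/-- `n1 = ⌊n/3⌋`. -/
def nOne (n : ℕ) : ℕ := n / 3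

/-- `n2 = n - 2 n1`. -/
def nTwo (n : ℕ) : ℕ := n - 2 * (n / 3)

/-- `f(n) = n1 (n1+1) n2 + n2 (n2-1)/2 + n1 (n1-1)`. -/
def f (n : ℕ) : ℕ :=
  nOne n * (nOne n + 1) * nTwo n + nTwo n * (nTwo n - 1) / 2 + nOne n * (nOne n - 1)

end

/-!
There are three balls with four collisions whose final velocities are aligned along a unit vector
`e` and pairwise distinct. Given `n` balls with final velocities close to such a configuration,
wait and rescale space and time: the balls become points on rays from the origin, and a ball
arriving from far behind with a carefully chosen large velocity triggers a relay in which each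
ball is hit nearly head-on by the one behind it, which is `n` further collisions. Such a relay is
computed backwards in time, from the last hit to the first. In the limit the new velocities are
again aligned and ordered along `e`, so the induction can go on, and it yields
`4 + (3 + 4 + ⋯ + (n - 1)) = n (n - 1) / 2 + 1` collisions. At a positive scale the velocities are
only nearly aligned, which is why the induction runs on the closure of the set of final
velocities.
-/

open Set Filter Topology

section Motion

variable {E : Type*} [NormedAddCommGroup E] [InnerProductSpace ℝ E]

theorem lt_norm_of_lt_inner {e x : E} (he : ‖e‖ = 1) {r : ℝ} (h : r < ⟪x, e⟫) : r < ‖x‖ :=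
  h.trans_le ((real_inner_le_norm x e).trans_eq (by rw [he, mul_one]))

/-- A uniform motion `t ↦ origin + t • vel`, the trajectory of a ball between two of its
collisions. -/
structure Motion (E : Type*) where
  origin : E
  vel : E

namespace Motion

/-- The position at time `t`. -/
def pos (m : Motion E) (t : ℝ) : E := m.origin + t • m.vel

/-- The uniform motion with velocity `v` which is at `x` at time `t`. -/
def through (t : ℝ) (x v : E) : Motion E := ⟨x - t • v, v⟩

theorem pos_eq (m : Motion E) (s t : ℝ) : m.pos t = m.pos s + (t - s) • m.vel := by
  simp only [pos, sub_smul]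
  abel

@[simp]
theorem vel_through (t : ℝ) (x v : E) : (through t x v).vel = v := rfl

@[simp]
theorem pos_through (t : ℝ) (x v : E) : (through t x v).pos t = x :=
  sub_add_cancel _ _

theorem continuous_pos (m : Motion E) : Continuous m.pos := by
  unfold pos
  fun_prop

theorem pos_sub_pos (p q : Motion E) (s t : ℝ) :
    p.pos t - q.pos t = p.pos s - q.pos s + (t - s) • (p.vel - q.vel) := by
  rw [p.pos_eq s, q.pos_eq s]
  module

theorem norm_pos_sub_pos_le {p q : Motion E} {s t : ℝ}
    (h : 0 ≤ (t - s) * ⟪p.pos s - q.pos s, p.vel - q.vel⟫) :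
    ‖p.pos s - q.pos s‖ ≤ ‖p.pos t - q.pos t‖ := by
  rw [pos_sub_pos p q s t, ← sq_le_sq₀ (norm_nonneg _) (norm_nonneg _), norm_add_sq_real,
    real_inner_smul_right]
  nlinarith [sq_nonneg ‖(t - s) • (p.vel - q.vel)‖]

/-- Two uniform motions whose distance is at least `r` at all times in `I`. -/
def Separated (r : ℝ) (I : Set ℝ) (p q : Motion E) : Prop :=
  ∀ t ∈ I, r ≤ ‖p.pos t - q.pos t‖

instance (r : ℝ) (I : Set ℝ) : Std.Symm (Separated (E := E) r I) where
  symm _ _ h t ht := (h t ht).trans_eq (norm_sub_rev _ _)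

variable {r t : ℝ} {p q : Motion E}

theorem Separated.mono {I J : Set ℝ} (h : Separated r J p q) (hIJ : I ⊆ J) :
    Separated r I p q :=
  fun t ht => h t (hIJ ht)

theorem separated_Ici_of_le_norm (h : r ≤ ‖p.pos t - q.pos t‖)
    (hvel : 0 ≤ ⟪p.pos t - q.pos t, p.vel - q.vel⟫) : Separated r (Ici t) p q :=
  fun _ hs => h.trans (norm_pos_sub_pos_le (mul_nonneg (sub_nonneg.2 hs) hvel))

theorem separated_Iic_of_le_norm (h : r ≤ ‖p.pos t - q.pos t‖)
    (hvel : ⟪p.pos t - q.pos t, p.vel - q.vel⟫ ≤ 0) : Separated r (Iic t) p q :=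
  fun _ hs => h.trans (norm_pos_sub_pos_le (mul_nonneg_of_nonpos_of_nonpos (sub_nonpos.2 hs) hvel))

theorem separated_Icc_of_lt_inner {e : E} (he : ‖e‖ = 1) {t₀ t₁ : ℝ}
    (h₀ : r < ⟪p.pos t₀ - q.pos t₀, e⟫) (h₁ : r < ⟪p.pos t₁ - q.pos t₁, e⟫) :
    Separated r (Icc t₀ t₁) p q := fun s hs => by
  refine (lt_norm_of_lt_inner he ?_).le
  rw [pos_sub_pos p q t₀, inner_add_left, real_inner_smul_left] at h₁ ⊢
  rcases le_total 0 ⟪p.vel - q.vel, e⟫ with hv | hv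
  · nlinarith [hs.1]
  · nlinarith [hs.2]

theorem separated_Ici_of_lt_inner {e : E} (he : ‖e‖ = 1)
    (h : r < ⟪p.pos t - q.pos t, e⟫) (hvel : 0 ≤ ⟪p.vel - q.vel, e⟫) :
    Separated r (Ici t) p q := fun s hs => by
  refine (lt_norm_of_lt_inner he ?_).le
  rw [pos_sub_pos p q t, inner_add_left, real_inner_smul_left]
  nlinarith [mem_Ici.1 hs]

theorem separated_Iic_of_lt_inner {e : E} (he : ‖e‖ = 1)
    (h : r < ⟪p.pos t - q.pos t, e⟫) (hvel : ⟪p.vel - q.vel, e⟫ ≤ 0) :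
    Separated r (Iic t) p q := fun s hs => by
  refine (lt_norm_of_lt_inner he ?_).le
  rw [pos_sub_pos p q t, inner_add_left, real_inner_smul_left]
  nlinarith [mem_Iic.1 hs]

end Motion

end Motion

open Motion

section Collision

variable {E : Type*} [NormedAddCommGroup E] [InnerProductSpace ℝ E]

/-- The bodies moving along `p` and `q`, of equal masses, collide elastically at time `t`, at
distance `r` and with the unit normal `u` pointing from `p` to `q`, and then move along `p'`
and `q'`. -/
structure Collision (r t : ℝ) (u : E) (p q p' q' : Motion E) : Prop where
  norm_normal : ‖u‖ = 1
  contact : q.pos t - p.pos t = r • u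
  approach : 0 < ⟪p.vel - q.vel, u⟫
  pos_left : p'.pos t = p.pos t
  pos_right : q'.pos t = q.pos t
  vel_left : p'.vel = p.vel - ⟪p.vel - q.vel, u⟫ • u
  vel_right : q'.vel = q.vel + ⟪p.vel - q.vel, u⟫ • u

namespace Collision

variable {r t : ℝ} {u : E} {p q p' q' : Motion E}

theorem symm (h : Collision r t u p q p' q') : Collision r t (-u) q p q' p' where
  norm_normal := by rw [norm_neg, h.norm_normal]
  contact := by rw [smul_neg, ← h.contact, neg_sub]
  approach := by simpa only [inner_neg_right, ← inner_neg_left, neg_sub] using h.approach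
  pos_left := h.pos_right
  pos_right := h.pos_left
  vel_left := by
    rw [h.vel_right, ← neg_sub p.vel q.vel, inner_neg_neg, smul_neg, sub_neg_eq_add]
  vel_right := by
    rw [h.vel_left, ← neg_sub p.vel q.vel, inner_neg_neg, smul_neg, sub_eq_add_neg]

theorem norm_contact (h : Collision r t u p q p' q') (hr : 0 ≤ r) :
    ‖p.pos t - q.pos t‖ = r := by
  rw [norm_sub_rev, h.contact, norm_smul, h.norm_normal, mul_one, Real.norm_of_nonneg hr]

theorem vel_left_ne (h : Collision r t u p q p' q') : p'.vel ≠ p.vel := by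
  have hu : u ≠ 0 := norm_ne_zero_iff.1 (h.norm_normal ▸ one_ne_zero)
  simpa [h.vel_left, hu] using h.approach.ne'

theorem inner_vel_after (h : Collision r t u p q p' q') :
    ⟪p'.vel - q'.vel, u⟫ = -⟪p.vel - q.vel, u⟫ := by
  rw [h.vel_left, h.vel_right]
  simp only [inner_sub_left, inner_add_left, inner_smul_left, real_inner_self_eq_norm_sq,
    h.norm_normal, RCLike.conj_to_real]
  ring

theorem separated_before (h : Collision r t u p q p' q') (hr : 0 ≤ r) :
    Separated r (Iic t) p q := by
  refine separated_Iic_of_le_norm (h.norm_contact hr).ge ?_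
  rw [← neg_sub (q.pos t), h.contact, inner_neg_left, real_inner_smul_left, real_inner_comm]
  exact neg_nonpos.2 (mul_nonneg hr h.approach.le)

theorem separated_after (h : Collision r t u p q p' q') (hr : 0 ≤ r) :
    Separated r (Ici t) p' q' := by
  have hpos : p'.pos t - q'.pos t = p.pos t - q.pos t := by rw [h.pos_left, h.pos_right]
  refine separated_Ici_of_le_norm (hpos ▸ (h.norm_contact hr).ge) ?_
  rw [hpos, ← neg_sub (q.pos t), h.contact, inner_neg_left, real_inner_smul_left,
    real_inner_comm, h.inner_vel_after, mul_neg, neg_neg]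
  exact mul_nonneg hr h.approach.le

theorem exists_of_separating (hr : 0 < r) (hdist : ‖p'.pos t - q'.pos t‖ = r)
    (hvel : 0 < ⟪p'.pos t - q'.pos t, p'.vel - q'.vel⟫) :
    ∃ u p q, Collision r t u p q p' q' := by
  have hcontact : q'.pos t - p'.pos t = r • r⁻¹ • (q'.pos t - p'.pos t) :=
    (smul_inv_smul₀ hr.ne' _).symm
  set u := r⁻¹ • (q'.pos t - p'.pos t) with hu
  have hu_norm : ‖u‖ = 1 := by
    rw [hu, norm_smul, norm_sub_rev, hdist, norm_inv, Real.norm_of_nonneg hr.le,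
      inv_mul_cancel₀ hr.ne']
  set κ := ⟪p'.vel - q'.vel, u⟫ with hκ
  have hκ_neg : κ < 0 := by
    rw [← neg_sub, hcontact, inner_neg_left, real_inner_smul_left, real_inner_comm] at hvel
    nlinarith
  have hinner : ⟪p'.vel - κ • u - (q'.vel + κ • u), u⟫ = -κ := by
    simp only [inner_sub_left, inner_add_left, real_inner_smul_left,
      real_inner_self_eq_norm_sq, hu_norm, hκ]
    ring
  refine ⟨u, through t (p'.pos t) (p'.vel - κ • u), through t (q'.pos t) (q'.vel + κ • u),
    hu_norm, ?_, ?_, (pos_through ..).symm, (pos_through ..).symm, ?_, ?_⟩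
  · simpa only [pos_through] using hcontact
  · simpa only [vel_through, hinner] using neg_pos.2 hκ_neg
  · simp only [vel_through, hinner, neg_smul, sub_neg_eq_add, sub_add_cancel]
  · simp only [vel_through, hinner, neg_smul, add_neg_cancel_right]

theorem norm_vel_sub_le (h : Collision r t u p q p' q') :
    ‖p.vel - p'.vel‖ ≤ ‖p'.vel - q'.vel‖ := by
  calc ‖p.vel - p'.vel‖ = ‖⟪p'.vel - q'.vel, u⟫‖ := by
        rw [h.inner_vel_after, h.vel_left, sub_sub_cancel, norm_smul, h.norm_normal, mul_one,
          norm_neg]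
    _ ≤ ‖p'.vel - q'.vel‖ :=
        (norm_inner_le_norm _ _).trans_eq (by rw [h.norm_normal, mul_one])

theorem separated_Iic_of_norm_le {c : ℝ} {e : E} {s : Motion E} (he : ‖e‖ = 1)
    (h : Collision c t u p q p' q') (hgap : r < ⟪p'.pos t - s.pos t, e⟫)
    (hvel : ‖p'.vel - q'.vel‖ ≤ ⟪s.vel - p'.vel, e⟫) : Separated r (Iic t) p s := by
  refine separated_Iic_of_lt_inner he (h.pos_left ▸ hgap) ?_
  have hpush : ⟪p.vel - p'.vel, e⟫ ≤ ‖p'.vel - q'.vel‖ :=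
    ((real_inner_le_norm _ e).trans_eq (by rw [he, mul_one])).trans h.norm_vel_sub_le
  rw [inner_sub_left] at hpush hvel ⊢
  linarith

end Collision

/-- In a system of balls of radius `1` moving along `m`, the balls `i` and `j` collide at time
`t`, no other ball being in contact with either of them, and the balls then move along `m'`. -/
structure SystemCollision {ι : Type*} (t : ℝ) (u : E) (i j : ι) (m m' : ι → Motion E) :
    Prop where
  collision : Collision 2 t u (m i) (m j) (m' i) (m' j)
  eq_of_ne : ∀ k, k ≠ i → k ≠ j → m' k = m k
  clear_left : ∀ k, k ≠ i → k ≠ j → 2 < ‖(m i).pos t - (m k).pos t‖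
  clear_right : ∀ k, k ≠ i → k ≠ j → 2 < ‖(m j).pos t - (m k).pos t‖

namespace SystemCollision

variable {ι : Type*} {t : ℝ} {u : E} {i j : ι} {m m' : ι → Motion E}

theorem symm (h : SystemCollision t u i j m m') : SystemCollision t (-u) j i m m' where
  collision := h.collision.symm
  eq_of_ne k hj hi := h.eq_of_ne k hi hj
  clear_left k hj hi := h.clear_right k hi hj
  clear_right k hj hi := h.clear_left k hi hj

theorem ne (h : SystemCollision t u i j m m') : i ≠ j := by
  rintro rfl
  simpa using h.collision.approach

theorem pos_eq (h : SystemCollision t u i j m m') (k : ι) : (m' k).pos t = (m k).pos t := by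
  by_cases hi : k = i
  · rw [hi, h.collision.pos_left]
  by_cases hj : k = j
  · rw [hj, h.collision.pos_right]
  rw [h.eq_of_ne k hi hj]

/-- The conclusion is the one of the field `collision_rule` of `BallSystem`. -/
theorem elastic_rule_left (h : SystemCollision t u i j m m') :
    ∃ l, l ≠ i ∧ ‖(m i).pos t - (m l).pos t‖ = 2 ∧ (m' l).vel ≠ (m l).vel ∧
      (∀ k, k ≠ i → ‖(m i).pos t - (m k).pos t‖ = 2 → k = l) ∧
      (∀ k, k ≠ i → k ≠ l → (m' k).vel = (m k).vel) ∧
      (m' i).vel = (m i).vel - ⟪(m i).vel - (m l).vel,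
        (2⁻¹ : ℝ) • ((m i).pos t - (m l).pos t)⟫ • ((2⁻¹ : ℝ) • ((m i).pos t - (m l).pos t)) ∧
      (m' l).vel = (m l).vel + ⟪(m i).vel - (m l).vel,
        (2⁻¹ : ℝ) • ((m i).pos t - (m l).pos t)⟫ •
          ((2⁻¹ : ℝ) • ((m i).pos t - (m l).pos t)) := by
  have hnormal : (2⁻¹ : ℝ) • ((m i).pos t - (m j).pos t) = -u := by
    rw [← neg_sub, h.collision.contact, smul_neg, inv_smul_smul₀ two_ne_zero]
  refine ⟨j, h.ne.symm, h.collision.norm_contact two_pos.le, h.collision.symm.vel_left_ne,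
    fun k hki hk => ?_, fun k hki hkj => by rw [h.eq_of_ne k hki hkj], ?_, ?_⟩
  · by_contra hkj
    exact (h.clear_left k hki hkj).ne' hk
  · rw [hnormal, inner_neg_right, neg_smul_neg, h.collision.vel_left]
  · rw [hnormal, inner_neg_right, neg_smul_neg, h.collision.vel_right]

theorem of_forall_eq {k : ι}
    (hk : ∀ l, l ≠ i → l ≠ j → l = k) (h : Collision 2 t u (m i) (m j) (m' i) (m' j))
    (heq : m' k = m k) (hi : 2 < ‖(m i).pos t - (m k).pos t‖)
    (hj : 2 < ‖(m j).pos t - (m k).pos t‖) : SystemCollision t u i j m m' where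
  collision := h
  eq_of_ne l hli hlj := by rw [hk l hli hlj, heq]
  clear_left l hli hlj := by rwa [hk l hli hlj]
  clear_right l hli hlj := by rwa [hk l hli hlj]

end SystemCollision

end Collision

noncomputable section Systems

variable {ι : Type} {d : ℕ} {t₀ t₁ : ℝ}

namespace BallSystem

theorem mem_collisions [DecidableEq ι] {S : BallSystem ι d (Iic t₀)} {p : ℝ × Finset ι} :
    p ∈ S.collisions ↔ p.1 ≤ t₀ ∧ ∃ i j, i ≠ j ∧ p.2 = {i, j} ∧
      ‖S.x i p.1 - S.x j p.1‖ = 2 ∧ S.vr i p.1 ≠ S.vl i p.1 ∧ S.vr j p.1 ≠ S.vl j p.1 :=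
  and_congr_right fun hp => and_iff_right
    ⟨p.1 - 1, (sub_one_lt p.1).le.trans hp, sub_one_lt p.1⟩

/-- Balls on uniform motions, none of which ever collide. -/
def free (I : Set ℝ) (m : ι → Motion (EuclideanSpace ℝ (Fin d)))
    (hsep : Pairwise (Function.onFun (Separated 2 I) m)) : BallSystem ι d I where
  x i := (m i).pos
  vr i _ := (m i).vel
  vl i _ := (m i).vel
  right_lin i t _ := ⟨1, one_pos, fun s _ => (m i).pos_eq t s⟩
  left_lin i t _ := ⟨1, one_pos, fun s _ => (m i).pos_eq t s⟩
  dist_ge _ _ hij := hsep hij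
  collision_rule _ _ _ _ h := absurd rfl h

variable {m : ι → Motion (EuclideanSpace ℝ (Fin d))}

theorem exists_right_lin_ite (S : BallSystem ι d (Iic t₀))
    (hm : ∀ i, S.x i t₀ = (m i).pos t₀ ∧ S.vr i t₀ = (m i).vel) (i : ι) (t : ℝ) :
    ∃ ε > 0, ∀ s ∈ Icc t (t + ε), (if s ≤ t₀ then S.x i s else (m i).pos s) =
      (if t ≤ t₀ then S.x i t else (m i).pos t) +
        (s - t) • if t ≤ t₀ then S.vr i t else (m i).vel := by
  rcases lt_trichotomy t t₀ with ht | rfl | ht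
  · obtain ⟨ε, hε, h⟩ := S.right_lin i t ht.le
    refine ⟨min ε (t₀ - t), lt_min hε (sub_pos.2 ht), fun s hs => ?_⟩
    have hst : s ≤ t + min ε (t₀ - t) := hs.2
    have hs₀ : s ≤ t₀ := by linarith [min_le_right ε (t₀ - t)]
    rw [if_pos hs₀, if_pos ht.le, if_pos ht.le]
    exact h s ⟨⟨hs.1, by linarith [min_le_left ε (t₀ - t)]⟩, hs₀⟩
  · refine ⟨1, one_pos, fun s hs => ?_⟩
    rw [if_pos le_rfl, if_pos le_rfl, (hm i).2, (hm i).1, ← (m i).pos_eq]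
    split_ifs with hs'
    · rw [le_antisymm hs' hs.1, (hm i).1]
    · rfl
  · refine ⟨1, one_pos, fun s hs => ?_⟩
    rw [if_neg (ht.trans_le hs.1).not_ge, if_neg ht.not_ge, if_neg ht.not_ge,
      ← (m i).pos_eq]

/-- The continuation by uniform motions of a system given up to time `t₀`. -/
def flight (S : BallSystem ι d (Iic t₀)) (I : Set ℝ)
    (hm : ∀ i, S.x i t₀ = (m i).pos t₀ ∧ S.vr i t₀ = (m i).vel)
    (hsep : Pairwise (Function.onFun (Separated 2 (I ∩ Ioi t₀)) m)) : BallSystem ι d I where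
  x i t := if t ≤ t₀ then S.x i t else (m i).pos t
  vr i t := if t ≤ t₀ then S.vr i t else (m i).vel
  vl i t := if t ≤ t₀ then S.vl i t else (m i).vel
  right_lin i t _ := by
    obtain ⟨ε, hε, h⟩ := S.exists_right_lin_ite hm i t
    exact ⟨ε, hε, fun s hs => h s hs.1⟩
  left_lin i t _ := by
    rcases le_or_gt t t₀ with ht | ht
    · obtain ⟨ε, hε, h⟩ := S.left_lin i t ht
      refine ⟨ε, hε, fun s hs => ?_⟩
      have hs₀ : s ≤ t₀ := hs.1.2.trans ht
      rw [if_pos hs₀, if_pos ht, if_pos ht]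
      exact h s ⟨hs.1, hs₀⟩
    · refine ⟨t - t₀, sub_pos.2 ht, fun s hs => ?_⟩
      rw [if_neg ht.not_ge, if_neg ht.not_ge, ← (m i).pos_eq]
      split_ifs with hs'
      · obtain rfl : s = t₀ := le_antisymm hs' (by linarith [hs.1.1])
        exact (hm i).1
      · rfl
  dist_ge i j hij t ht := by
    split_ifs with h
    · exact S.dist_ge i j hij t h
    · exact hsep hij t ⟨ht, not_le.1 h⟩
  collision_rule i t _ _ := by
    split_ifs with h
    · exact S.collision_rule i t h ⟨t - 1, (sub_one_lt t).le.trans h, sub_one_lt t⟩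
    · exact fun hne => absurd rfl hne

theorem collisions_subset_flight [DecidableEq ι] (S : BallSystem ι d (Iic t₀)) {I : Set ℝ}
    (hI : Iic t₀ ⊆ I) (hm : ∀ i, S.x i t₀ = (m i).pos t₀ ∧ S.vr i t₀ = (m i).vel)
    (hsep : Pairwise (Function.onFun (Separated 2 (I ∩ Ioi t₀)) m)) :
    S.collisions ⊆ (S.flight I hm hsep).collisions := by
  rintro ⟨t, P⟩ ⟨ht, ⟨s, hs, hst⟩, h⟩
  have ht' : t ≤ t₀ := ht
  exact ⟨hI ht, ⟨s, hI hs, hst⟩, by simpa only [flight, if_pos ht'] using h⟩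

/-- The system obtained from a system with final velocities `(m k).vel` by a collision at its
final time. -/
def redirect (S : BallSystem ι d (Iic t₁)) {m' : ι → Motion (EuclideanSpace ℝ (Fin d))}
    {u : EuclideanSpace ℝ (Fin d)} {i j : ι}
    (hm : ∀ k, S.x k t₁ = (m k).pos t₁ ∧ S.vl k t₁ = (m k).vel)
    (h : SystemCollision t₁ u i j m m') : BallSystem ι d (Iic t₁) where
  __ := S
  vr k := Function.update (S.vr k) t₁ (m' k).vel
  right_lin k t ht := by
    rcases (mem_Iic.1 ht).eq_or_lt with rfl | ht'
    · refine ⟨1, one_pos, fun s hs => ?_⟩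
      rw [le_antisymm hs.2 hs.1.1, sub_self, zero_smul, add_zero]
    · simpa only [Function.update_of_ne ht'.ne] using S.right_lin k t ht
  collision_rule k t ht hs := by
    rcases (mem_Iic.1 ht).eq_or_lt with rfl | ht'
    · simp only [Function.update_self, (hm _).1, (hm _).2]
      intro hne
      rcases eq_or_ne k i with rfl | hi
      · exact h.elastic_rule_left
      rcases eq_or_ne k j with rfl | hj
      · exact h.symm.elastic_rule_left
      · exact absurd (by rw [h.eq_of_ne k hi hj]) hne
    · simpa only [Function.update_of_ne ht'.ne] using S.collision_rule k t ht hs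

theorem encard_collisions_redirect [DecidableEq ι] (S : BallSystem ι d (Iic t₁))
    {m' : ι → Motion (EuclideanSpace ℝ (Fin d))} {u : EuclideanSpace ℝ (Fin d)} {i j : ι}
    (hm : ∀ k, S.x k t₁ = (m k).pos t₁ ∧ S.vl k t₁ = (m k).vel)
    (h : SystemCollision t₁ u i j m m') (hvr : ∀ k, S.vr k t₁ = (m k).vel) :
    S.collisions.encard + 1 ≤ (S.redirect hm h).collisions.encard := by
  have hnew : (t₁, {i, j}) ∉ S.collisions := by
    intro hmem
    obtain ⟨-, k, -, -, -, -, hk, -⟩ := mem_collisions.1 hmem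
    exact hk ((hvr k).trans (hm k).2.symm)
  rw [← encard_insert_of_notMem hnew]
  refine encard_le_encard (insert_subset ?_ fun p hp => ?_)
  · refine mem_collisions.2 ⟨le_rfl, i, j, h.ne, rfl, ?_⟩
    simpa only [redirect, Function.update_self, (hm _).1, (hm _).2] using
      ⟨h.collision.norm_contact two_pos.le, h.collision.vel_left_ne,
        h.collision.symm.vel_left_ne⟩
  · obtain ⟨ht, k, l, hkl, hP, hdist, hk, hl⟩ := mem_collisions.1 hp
    have hne : p.1 ≠ t₁ := fun ht₁ => hk (by rw [ht₁, hvr, (hm k).2])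
    refine mem_collisions.2 ⟨ht, k, l, hkl, hP, hdist, ?_⟩
    simpa only [redirect, Function.update_of_ne hne] using ⟨hk, hl⟩

/-- The system with a further, last ball, on the uniform motion `q`. -/
def snoc {n : ℕ} (S : BallSystem (Fin n) d (Iic t₀)) (q : Motion (EuclideanSpace ℝ (Fin d)))
    (hq : ∀ i, ∀ t ≤ t₀, 2 < ‖S.x i t - q.pos t‖) : BallSystem (Fin (n + 1)) d (Iic t₀) where
  x := Fin.snoc S.x q.pos
  vr := Fin.snoc S.vr fun _ => q.vel
  vl := Fin.snoc S.vl fun _ => q.vel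
  right_lin := Fin.lastCases
    (fun t _ => ⟨1, one_pos, fun s _ => by simpa only [Fin.snoc_last] using q.pos_eq t s⟩)
    fun i => by simpa only [Fin.snoc_castSucc] using S.right_lin i
  left_lin := Fin.lastCases
    (fun t _ => ⟨1, one_pos, fun s _ => by simpa only [Fin.snoc_last] using q.pos_eq t s⟩)
    fun i => by simpa only [Fin.snoc_castSucc] using S.left_lin i
  dist_ge i j hij t ht := by
    induction i using Fin.lastCases with
    | last =>
      induction j using Fin.lastCases with
      | last => exact absurd rfl hij
      | cast j => simpa only [Fin.snoc_last, Fin.snoc_castSucc, norm_sub_rev] using (hq j t ht).le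
    | cast i =>
      induction j using Fin.lastCases with
      | last => simpa only [Fin.snoc_last, Fin.snoc_castSucc] using (hq i t ht).le
      | cast j =>
        simpa only [Fin.snoc_castSucc] using
          S.dist_ge i j (fun h => hij (congrArg Fin.castSucc h)) t ht
  collision_rule := Fin.lastCases (fun t _ _ h => absurd (by simp only [Fin.snoc_last]) h)
    fun i t ht hs hne => by
      simp only [Fin.snoc_castSucc] at hne ⊢
      obtain ⟨j, hji, hdist, hj, huniq, hrest, hvel⟩ := S.collision_rule i t ht hs hne
      refine ⟨j.castSucc, by simpa using hji, ?_⟩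
      simp only [Fin.snoc_castSucc]
      refine ⟨hdist, hj, Fin.lastCases ?_ fun k => ?_, Fin.lastCases ?_ fun k => ?_, hvel⟩
      · intro _ h
        rw [Fin.snoc_last] at h
        exact absurd h (hq i t ht).ne'
      · simpa only [Fin.snoc_castSucc, ne_eq, Fin.castSucc_inj] using huniq k
      · intro _ _
        simp only [Fin.snoc_last]
      · simpa only [Fin.snoc_castSucc, ne_eq, Fin.castSucc_inj] using hrest k

theorem encard_collisions_snoc {n : ℕ} (S : BallSystem (Fin n) d (Iic t₀))
    (q : Motion (EuclideanSpace ℝ (Fin d))) (hq : ∀ i, ∀ t ≤ t₀, 2 < ‖S.x i t - q.pos t‖) :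
    S.collisions.encard ≤ (S.snoc q hq).collisions.encard := by
  have hinj : Function.Injective
      (Prod.map id (Finset.map Fin.castSuccEmb) : ℝ × Finset (Fin n) → ℝ × Finset (Fin (n + 1))) :=
    Function.injective_id.prodMap (Finset.map_injective _)
  rw [← hinj.encard_image]
  refine encard_le_encard (image_subset_iff.2 fun p hp => ?_)
  obtain ⟨ht, i, j, hij, hP, h⟩ := mem_collisions.1 hp
  refine mem_collisions.2 ⟨ht, i.castSucc, j.castSucc, by simpa using hij, by simp [hP], ?_⟩
  simpa only [snoc, Fin.snoc_castSucc, Prod.map_fst, id] using h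

end BallSystem

end Systems

section Attains

variable {E : Type*} [NormedAddCommGroup E] [InnerProductSpace ℝ E]

theorem Motion.bddBelow_inner_pos {e : E} {B : ℝ} (m : Motion E) (t : ℝ) (hB : ⟪m.vel, e⟫ ≤ B) :
    BddBelow ((fun s => ⟪m.pos s, e⟫ - B * s) '' Iic t) := by
  refine ⟨⟪m.pos t, e⟫ - B * t, forall_mem_image.2 fun s hs => ?_⟩
  rw [m.pos_eq t s, inner_add_left, real_inner_smul_left]
  nlinarith [mem_Iic.1 hs]

theorem Motion.bddBelow_inner_ite_pos {e : E} {B t₀ : ℝ} {x : ℝ → E} (m : Motion E) (t : ℝ)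
    (hx : BddBelow ((fun s => ⟪x s, e⟫ - B * s) '' Iic t₀)) :
    BddBelow ((fun s => ⟪if s ≤ t₀ then x s else m.pos s, e⟫ - B * s) '' Iic t) := by
  have hcont : Continuous fun s => ⟪m.pos s, e⟫ - B * s := by
    have := m.continuous_pos
    fun_prop
  refine BddBelow.mono ?_
    (hx.union ((isCompact_Icc (a := t₀) (b := t)).bddBelow_image hcont.continuousOn))
  rintro _ ⟨s, hs, rfl⟩
  rcases le_or_gt s t₀ with h | h
  · exact .inl ⟨s, h, by simp only [if_pos h]⟩
  · exact .inr ⟨s, ⟨h.le, hs⟩, by simp only [if_neg h.not_ge]⟩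

variable {ι : Type} [DecidableEq ι] {d : ℕ} {e : EuclideanSpace ℝ (Fin d)} {B : ℝ} {N : ℕ}
  {t₀ t₁ : ℝ} {m : ι → Motion (EuclideanSpace ℝ (Fin d))}

/-- Some system of balls has at least `N` collisions up to time `t` and leaves time `t` along
the motions `m`. The last condition says that, in the direction `e`, a ball with velocity
greater than `B` was behind all the balls of the system in the remote past. -/
def Attains (e : EuclideanSpace ℝ (Fin d)) (B : ℝ) (N : ℕ) (t : ℝ)
    (m : ι → Motion (EuclideanSpace ℝ (Fin d))) : Prop :=
  ∃ S : BallSystem ι d (Iic t), (N : ℕ∞) ≤ S.collisions.encard ∧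
    (∀ i, S.x i t = (m i).pos t ∧ S.vr i t = (m i).vel) ∧
    ∀ i, BddBelow ((fun s => ⟪S.x i s, e⟫ - B * s) '' Iic t)

namespace Attains

theorem of_separated (hsep : Pairwise (Function.onFun (Separated 2 (Iic t₀)) m))
    (hB : ∀ i, ⟪(m i).vel, e⟫ ≤ B) : Attains e B 0 t₀ m :=
  ⟨.free _ m hsep, by simp, fun _ => ⟨rfl, rfl⟩, fun i => (m i).bddBelow_inner_pos t₀ (hB i)⟩

theorem collide (h : Attains e B N t₀ m) (ht : t₀ < t₁) {u : EuclideanSpace ℝ (Fin d)} {i j : ι}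
    {m' : ι → Motion (EuclideanSpace ℝ (Fin d))} (hc : SystemCollision t₁ u i j m m')
    (hsep : Pairwise (Function.onFun (Separated 2 (Icc t₀ t₁)) m)) :
    Attains e B (N + 1) t₁ m' := by
  obtain ⟨S, hN, hm, hbdd⟩ := h
  have hsep' : Pairwise (Function.onFun (Separated 2 (Iic t₁ ∩ Ioi t₀)) m) :=
    hsep.mono fun k l h s hs => h s ⟨hs.2.le, hs.1⟩
  set T := S.flight (Iic t₁) hm hsep'
  have hx : ∀ k, T.x k t₁ = (m k).pos t₁ := fun k => if_neg ht.not_ge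
  refine ⟨T.redirect (fun k => ⟨hx k, if_neg ht.not_ge⟩) hc, ?_, fun k => ⟨?_, ?_⟩, fun k => ?_⟩
  · refine le_trans ?_ (T.encard_collisions_redirect _ hc fun k => if_neg ht.not_ge)
    push_cast
    exact add_le_add_left (hN.trans (encard_le_encard
      (S.collisions_subset_flight (Iic_subset_Iic.2 ht.le) hm hsep'))) 1
  · exact (hx k).trans (hc.pos_eq k).symm
  · exact Function.update_self ..
  · exact (m k).bddBelow_inner_ite_pos t₁ (hbdd k)

theorem exists_snoc {n : ℕ} {m : Fin n → Motion (EuclideanSpace ℝ (Fin d))} (he : ‖e‖ = 1)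
    (h : Attains e B N t₀ m) :
    ∃ A : ℝ, ∀ B' (q : Motion (EuclideanSpace ℝ (Fin d))), B ≤ ⟪q.vel, e⟫ → ⟪q.vel, e⟫ ≤ B' →
      ⟪q.pos t₀, e⟫ < A → Attains e B' N t₀ (Fin.snoc m q : Fin (n + 1) → _) := by
  obtain ⟨S, hN, hm, hbdd⟩ := h
  choose a ha using hbdd
  obtain ⟨b, hb⟩ := (finite_range a).bddBelow
  have hx (i) (s) (hs : s ≤ t₀) : b ≤ ⟪S.x i s, e⟫ - B * s :=
    (hb (mem_range_self i)).trans (ha i (mem_image_of_mem _ hs))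
  refine ⟨b + B * t₀ - 2, fun B' q hq hqB' hA => ?_⟩
  have hqsep (i) (s) (hs : s ≤ t₀) : 2 < ‖S.x i s - q.pos s‖ := by
    refine lt_norm_of_lt_inner he ?_
    rw [inner_sub_left, q.pos_eq t₀ s, inner_add_left, real_inner_smul_left]
    nlinarith [hx i s hs]
  refine ⟨S.snoc q hqsep, hN.trans (S.encard_collisions_snoc q hqsep),
    Fin.lastCases ?_ fun i => ?_, Fin.lastCases ?_ fun i => ?_⟩
  · simp only [BallSystem.snoc, Fin.snoc_last, and_self]
  · simpa only [BallSystem.snoc, Fin.snoc_castSucc] using hm i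
  · simpa only [BallSystem.snoc, Fin.snoc_last] using q.bddBelow_inner_pos t₀ hqB'
  · simp only [BallSystem.snoc, Fin.snoc_castSucc]
    refine ⟨b + (B - B') * t₀, forall_mem_image.2 fun s hs => ?_⟩
    nlinarith [hx i s hs, mem_Iic.1 hs]

theorem exists_ballSystem_univ (h : Attains e B N t₀ m)
    (hsep : Pairwise (Function.onFun (Separated 2 (Ici t₀)) m)) :
    ∃ S : BallSystem ι d univ, ∃ F : Finset (ℝ × Finset ι), ↑F ⊆ S.collisions ∧ F.card = N := by
  obtain ⟨S, hN, hm, -⟩ := h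
  have hsep' : Pairwise (Function.onFun (Separated 2 (univ ∩ Ioi t₀)) m) :=
    hsep.mono fun k l h s hs => h s (mem_Ioi.1 hs.2).le
  obtain ⟨F, hF, hcard⟩ := exists_subset_encard_eq hN
  obtain ⟨F, rfl⟩ := (finite_of_encard_eq_coe hcard).exists_finset_coe
  exact ⟨S.flight univ hm hsep', F,
    hF.trans (S.collisions_subset_flight (subset_univ _) hm hsep'), by simpa using hcard⟩

end Attains

end Attains

section RelayPhase

/-- The motion of body `i` in a relay after the collision `k`. -/
def relayPhase {α : Type*} (m proj recoil : ℕ → α) (k i : ℕ) : α :=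
  if i < k then m i else if i = k then proj k else recoil (i - 1)

variable {α : Type*} (m proj recoil : ℕ → α) (k : ℕ)

theorem relayPhase_self : relayPhase m proj recoil k k = proj k := by simp [relayPhase]

theorem relayPhase_add_one : relayPhase m proj recoil k (k + 1) = recoil k := by simp [relayPhase]

variable {k}

theorem relayPhase_of_lt {i : ℕ} (hi : i < k) : relayPhase m proj recoil k i = m i := if_pos hi

theorem relayPhase_succ_of_ne {i : ℕ} (hi : i ≠ k + 1) (hi' : i ≠ k) :
    relayPhase m proj recoil k i = relayPhase m proj recoil (k + 1) i := by
  unfold relayPhase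
  split_ifs <;> first | rfl | omega

end RelayPhase

section Relay

variable {E : Type*} [NormedAddCommGroup E] [InnerProductSpace ℝ E]

/-- From time `t` on, the ball on `p` stays apart from the ball on `q`, or at time `t` it is
separated from it in the direction `e`. In the second case the balls may meet later. -/
def Clear (e : E) (t : ℝ) (p q : Motion E) : Prop :=
  Separated 2 (Ici t) p q ∨ 2 < ⟪p.pos t - q.pos t, e⟫

/-- The bodies `0, …, n - 1`, in this order from the front to the rear in the direction `e`,
move along `m`, and a body `n` arrives from behind along `proj n`. At time `τ k`, body `k + 1`,
moving along `proj (k + 1)`, hits body `k`; the former continues along `recoil k` and the latter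
along `proj k`. The collisions thus take place in the order `n - 1, …, 0`, and at each of them
all pairs of bodies but the colliding one are separated in the direction `e`. -/
structure Relay (e : E) (r : ℝ) (n : ℕ) (m proj recoil : ℕ → Motion E) (τ : ℕ → ℝ) : Prop where
  time_lt : ∀ i j, i < j → j < n → τ j < τ i
  collision : ∀ k < n, ∃ u, Collision r (τ k) u (proj (k + 1)) (m k) (recoil k) (proj k)
  gap : ∀ k < n, ∀ i j, i < j → j ≤ n → (i, j) ≠ (k, k + 1) →
    r < ⟪(relayPhase m proj recoil k i).pos (τ k) - (relayPhase m proj recoil k j).pos (τ k), e⟫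

end Relay

section Relay

variable {d : ℕ} {e : EuclideanSpace ℝ (Fin d)} {B : ℝ} {N n : ℕ} {t : ℝ}
  {m proj recoil : ℕ → Motion (EuclideanSpace ℝ (Fin d))} {τ : ℕ → ℝ}

namespace Relay

theorem two_lt_norm (he : ‖e‖ = 1) (h : Relay e 2 n m proj recoil τ) {k i j : ℕ} (hk : k < n)
    (hi : i ≤ n) (hj : j ≤ n) (hj₁ : j ≠ k + 1) (hj₀ : j ≠ k) (hij : j ≠ i) :
    2 < ‖(relayPhase m proj recoil k i).pos (τ k) - (relayPhase m proj recoil k j).pos (τ k)‖ := by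
  rcases hij.lt_or_gt with hlt | hlt
  · rw [norm_sub_rev]
    exact lt_norm_of_lt_inner he (h.gap k hk j i hlt hi (by simp [hj₀]))
  · exact lt_norm_of_lt_inner he (h.gap k hk i j hlt hj (by simp [hj₁]))

theorem pos_succ (h : Relay e 2 n m proj recoil τ) {k : ℕ} (hk : k < n) (i : ℕ) :
    (relayPhase m proj recoil (k + 1) i).pos (τ k) = (relayPhase m proj recoil k i).pos (τ k) := by
  obtain ⟨u, hu⟩ := h.collision k hk
  by_cases hi₁ : i = k + 1
  · rw [hi₁, relayPhase_self, relayPhase_add_one, hu.pos_left]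
  by_cases hi₀ : i = k
  · rw [hi₀, relayPhase_self, relayPhase_of_lt _ _ _ k.lt_add_one, hu.pos_right]
  rw [relayPhase_succ_of_ne _ _ _ hi₁ hi₀]

theorem systemCollision (he : ‖e‖ = 1) (h : Relay e 2 n m proj recoil τ) {k : ℕ} (hk : k < n) :
    ∃ u, SystemCollision (τ k) u (⟨k + 1, by omega⟩ : Fin (n + 1)) ⟨k, by omega⟩
      (fun i => relayPhase m proj recoil (k + 1) i) (fun i => relayPhase m proj recoil k i) := by
  obtain ⟨u, hu⟩ := h.collision k hk
  refine ⟨u, ?_, fun i hi₁ hi₀ => ?_, fun i hi₁ hi₀ => ?_, fun i hi₁ hi₀ => ?_⟩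
  · simpa only [relayPhase_self, relayPhase_add_one, relayPhase_of_lt _ _ _ k.lt_add_one] using hu
  all_goals rw [Fin.ne_iff_vne] at hi₁ hi₀
  · exact relayPhase_succ_of_ne _ _ _ hi₁ hi₀
  · simpa only [h.pos_succ hk] using h.two_lt_norm he hk hk i.is_le hi₁ hi₀ hi₁
  · simpa only [h.pos_succ hk] using h.two_lt_norm he hk hk.le i.is_le hi₁ hi₀ hi₀

theorem separated_of_clear (he : ‖e‖ = 1) (h : Relay e 2 n m proj recoil τ) {k : ℕ} (hk : k < n)
    {i j : ℕ} (hij : i < j) (hj : j ≤ n)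
    (hclear : Clear e t (relayPhase m proj recoil (k + 1) i) (relayPhase m proj recoil (k + 1) j)) :
    Separated 2 (Icc t (τ k)) (relayPhase m proj recoil (k + 1) i)
      (relayPhase m proj recoil (k + 1) j) := by
  by_cases hpair : (i, j) = (k, k + 1)
  · obtain ⟨rfl, rfl⟩ := Prod.mk.inj hpair
    obtain ⟨u, hu⟩ := h.collision i hk
    rw [relayPhase_self, relayPhase_of_lt _ _ _ i.lt_add_one]
    exact fun s hs => hu.symm.separated_before two_pos.le s hs.2
  · refine hclear.elim (fun hsep s hs => hsep s hs.1) fun hgap => ?_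
    refine separated_Icc_of_lt_inner he hgap ?_
    simpa only [h.pos_succ hk] using h.gap k hk i j hij hj hpair

theorem clear_phase (h : Relay e 2 n m proj recoil τ) {k : ℕ} (hk : k < n) {i j : ℕ} (hij : i < j)
    (hj : j ≤ n) :
    Clear e (τ k) (relayPhase m proj recoil k i) (relayPhase m proj recoil k j) := by
  by_cases hpair : (i, j) = (k, k + 1)
  · obtain ⟨rfl, rfl⟩ := Prod.mk.inj hpair
    obtain ⟨u, hu⟩ := h.collision i hk
    rw [relayPhase_self, relayPhase_add_one]
    exact .inl (hu.symm.separated_after two_pos.le)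
  · exact .inr (h.gap k hk i j hij hj hpair)

theorem attains (he : ‖e‖ = 1) (h : Relay e 2 n m proj recoil τ)
    (hm : Attains e B N t fun i : Fin (n + 1) => relayPhase m proj recoil n i)
    (ht : ∀ k < n, t < τ k) (hclear : ∀ i j, i < j → j ≤ n →
      Clear e t (relayPhase m proj recoil n i) (relayPhase m proj recoil n j)) {k : ℕ}
    (hk : k ≤ n) :
    ∃ s, (∀ l < k, s < τ l) ∧
      Attains e B (N + (n - k)) s (fun i : Fin (n + 1) => relayPhase m proj recoil k i) ∧
      ∀ i j, i < j → j ≤ n →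
        Clear e s (relayPhase m proj recoil k i) (relayPhase m proj recoil k j) := by
  induction hk using Nat.decreasingInduction with
  | self => exact ⟨t, ht, by simpa using hm, hclear⟩
  | of_succ k hk ih =>
    obtain ⟨s, hs, hattains, hclear⟩ := ih
    obtain ⟨u, hu⟩ := h.systemCollision he hk
    refine ⟨τ k, fun l hl => h.time_lt l k hl hk, ?_, fun i j => h.clear_phase hk⟩
    rw [show N + (n - k) = N + (n - (k + 1)) + 1 by omega]
    refine hattains.collide (hs k k.lt_add_one) hu (Std.Symm.pairwise_on _ |>.2 fun i j hij => ?_)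
    exact h.separated_of_clear he hk hij j.is_le (hclear i j hij j.is_le)

end Relay

end Relay

noncomputable section Hit

variable {E : Type*} [NormedAddCommGroup E] [InnerProductSpace ℝ E]

/-- The hit received by a body of a relay: its time, its unit normal, and the velocity with
which the body continues. -/
structure Hit (E : Type*) where
  time : ℝ
  normal : E
  vel : E

namespace Hit

/-- A body moving along `p` is pushed by the hit `h` in the direction of its normal. -/
structure Pushes (h : Hit E) (p : Motion E) : Prop where
  norm_normal : ‖h.normal‖ = 1
  exists_vel_eq : ∃ a > (0 : ℝ), h.vel = p.vel + a • h.normal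

/-- The motion after the hit `h` of a body which came along `p`. -/
def after (h : Hit E) (p : Motion E) : Motion E := through h.time (p.pos h.time) h.vel

/-- The motion, after the hit `h`, of the body which hit at distance `r` and with velocity `w` a
body coming along `p`. -/
def recoil (r : ℝ) (h : Hit E) (p : Motion E) (w : E) : Motion E :=
  through h.time (p.pos h.time - r • h.normal) (w + p.vel - h.vel)

/-- The hit by which a body coming along `q` is sent to hit, at distance `r`, a body coming along
`p` in such a way that the latter receives the hit `h`. -/
def prev (r : ℝ) (p q : Motion E) (h : Hit E) : Hit E :=
  let D := p.pos h.time - r • h.normal - q.pos h.time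
  let s := ⟪D, h.normal⟫ / ⟪h.vel - q.vel, h.normal⟫
  ⟨h.time - s, ‖D‖⁻¹ • D, q.vel + s⁻¹ • D⟩

variable {r : ℝ} {p q : Motion E} {h : Hit E}

theorem pushes_prev (ht : (h.prev r p q).time < h.time) : (h.prev r p q).Pushes q := by
  simp only [prev, sub_lt_self_iff] at ht
  have hD : p.pos h.time - r • h.normal - q.pos h.time ≠ 0 := fun h0 => by simp [h0] at ht
  have hnorm := norm_pos_iff.2 hD
  refine ⟨norm_smul_inv_norm (𝕜 := ℝ) hD, _, mul_pos (inv_pos.2 ht) hnorm, ?_⟩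
  simp only [prev]
  rw [smul_smul, mul_assoc, mul_inv_cancel₀ hnorm.ne', mul_one]

theorem pos_after_prev (ht : (h.prev r p q).time < h.time) :
    ((h.prev r p q).after q).pos h.time = p.pos h.time - r • h.normal := by
  simp only [prev, sub_lt_self_iff] at ht
  rw [after, pos_eq _ (h.prev r p q).time, pos_through, vel_through, q.pos_eq h.time]
  simp only [prev, sub_sub_cancel, sub_sub_cancel_left, smul_add, smul_inv_smul₀ ht.ne']
  module

theorem inner_vel_prev (ht : (h.prev r p q).time < h.time) :
    ⟪(h.prev r p q).vel, h.normal⟫ = ⟪h.vel, h.normal⟫ := by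
  simp only [prev, sub_lt_self_iff] at ht
  obtain ⟨hD, hv⟩ := div_ne_zero_iff.1 ht.ne'
  rw [inner_sub_left h.vel] at hv
  simp only [prev, inner_add_left, real_inner_smul_left, inner_sub_left h.vel]
  field_simp
  ring

theorem collision (hp : h.Pushes p) (ht : (h.prev r p q).time < h.time) :
    Collision r h.time h.normal ((h.prev r p q).after q) p (h.recoil r p (h.prev r p q).vel)
      (h.after p) := by
  obtain ⟨hnormal, a, ha, hvel⟩ := hp
  have hinner : ⟪((h.prev r p q).after q).vel - p.vel, h.normal⟫ = a := by
    rw [after, vel_through, inner_sub_left, inner_vel_prev ht, hvel, inner_add_left,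
      real_inner_smul_left, real_inner_self_eq_norm_sq, hnormal]
    ring
  refine ⟨hnormal, ?_, hinner ▸ ha, ?_, ?_, ?_, ?_⟩
  · rw [pos_after_prev ht, sub_sub_cancel]
  · rw [pos_after_prev ht, recoil, pos_through]
  · rw [after, pos_through]
  · rw [hinner, recoil, after, vel_through, vel_through, hvel]
    abel
  · rw [hinner, after, vel_through, hvel]

end Hit

end Hit

section Limits

variable {E : Type*} [NormedAddCommGroup E] [InnerProductSpace ℝ E] {e : E} {α : Type*}
  {l : Filter α}

theorem inner_smul_self_of_norm_eq_one (he : ‖e‖ = 1) (c : ℝ) : ⟪c • e, e⟫ = c := by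
  rw [real_inner_smul_left, real_inner_self_eq_norm_sq, he, one_pow, mul_one]

/-- Along the filter `l`, the motions `p` converge to the motion with velocity `c • e` starting
from `0` at time `0`. -/
structure TendstoRay (l : Filter α) (p : α → Motion E) (c : ℝ) (e : E) : Prop where
  origin : Tendsto (fun a => (p a).origin) l (𝓝 0)
  vel : Tendsto (fun a => (p a).vel) l (𝓝 (c • e))

theorem TendstoRay.pos {p : α → Motion E} {c : ℝ} (hp : TendstoRay l p c e) {t : α → ℝ} {ρ : ℝ}
    (ht : Tendsto t l (𝓝 ρ)) : Tendsto (fun a => (p a).pos (t a)) l (𝓝 ((ρ * c) • e)) := by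
  simpa only [Motion.pos, zero_add, smul_smul] using hp.origin.add (ht.smul hp.vel)

/-- Along the filter `l`, the hits `h` converge to the head-on hit at time `ρ` in the direction
`e` after which the velocity is `V • e`. -/
structure Hit.TendstoHeadOn (l : Filter α) (h : α → Hit E) (ρ V : ℝ) (e : E) : Prop where
  time : Tendsto (fun a => (h a).time) l (𝓝 ρ)
  normal : Tendsto (fun a => (h a).normal) l (𝓝 e)
  vel : Tendsto (fun a => (h a).vel) l (𝓝 (V • e))

variable {r : α → ℝ} {p q : α → Motion E} {h : α → Hit E} {b c ρ V : ℝ}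

theorem Hit.TendstoHeadOn.prev (he : ‖e‖ = 1) (hr : Tendsto r l (𝓝 0)) (hp : TendstoRay l p c e)
    (hq : TendstoRay l q b e) (hbc : b < c) (hcV : c < V) (hρ : 0 < ρ)
    (hh : TendstoHeadOn l h ρ V e) :
    TendstoHeadOn l (fun a => (h a).prev (r a) (p a) (q a)) (ρ * (V - c) / (V - b)) V e := by
  have hVb : V - b ≠ 0 := by linarith
  have hcb : 0 < ρ * (c - b) := mul_pos hρ (sub_pos.2 hbc)
  have hnorm : ‖(ρ * (c - b)) • e‖ = ρ * (c - b) := by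
    rw [norm_smul, he, mul_one, Real.norm_of_nonneg hcb.le]
  have hD : Tendsto (fun a => (p a).pos (h a).time - r a • (h a).normal - (q a).pos (h a).time) l
      (𝓝 ((ρ * (c - b)) • e)) := by
    convert ((hp.pos hh.time).sub (hr.smul hh.normal)).sub (hq.pos hh.time) using 2
    module
  have hs := (hD.inner (𝕜 := ℝ) hh.normal).div
    ((hh.vel.sub hq.vel).inner (𝕜 := ℝ) hh.normal)
    (by rwa [← sub_smul, inner_smul_self_of_norm_eq_one he])
  rw [← sub_smul, inner_smul_self_of_norm_eq_one he, inner_smul_self_of_norm_eq_one he] at hs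
  have hu := (hD.norm.inv₀ (by rw [hnorm]; exact hcb.ne')).smul hD
  rw [hnorm, inv_smul_smul₀ hcb.ne'] at hu
  have hv := hq.vel.add ((hs.inv₀ (div_ne_zero hcb.ne' hVb)).smul hD)
  rw [smul_smul, inv_div, div_mul_cancel₀ _ hcb.ne', ← add_smul, add_sub_cancel] at hv
  refine ⟨?_, hu, hv⟩
  rw [show ρ * (V - c) / (V - b) = ρ - ρ * (c - b) / (V - b) by field_simp; ring]
  exact hh.time.sub hs

end Limits

noncomputable section RelayHit

variable {E : Type*} [NormedAddCommGroup E] [InnerProductSpace ℝ E] {e : E} {V r : ℝ} {n k : ℕ}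

/-- The hits received by the bodies of a relay, computed backwards in time: at time `1` the body
in front is hit in the direction `e`, after which its velocity in this direction is `V`. -/
def relayHit (e : E) (V r : ℝ) (m : ℕ → Motion E) : ℕ → Hit E
  | 0 => ⟨1, e, (m 0).vel + (V - ⟪(m 0).vel, e⟫) • e⟩
  | k + 1 => (relayHit e V r m k).prev r (m k) (m (k + 1))

/-- The motion of body `k` of the relay between the hit it receives and the one it gives. -/
def relayProj (e : E) (V r : ℝ) (m : ℕ → Motion E) (k : ℕ) : Motion E :=
  (relayHit e V r m k).after (m k)

/-- The motion of body `k + 1` of the relay after it has hit body `k`. -/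
def relayRecoil (e : E) (V r : ℝ) (m : ℕ → Motion E) (k : ℕ) : Motion E :=
  (relayHit e V r m k).recoil r (m k) (relayHit e V r m (k + 1)).vel

theorem pushes_relayHit {m : ℕ → Motion E} (he : ‖e‖ = 1) (hV : ⟪(m 0).vel, e⟫ < V)
    (ht : ∀ k < n, (relayHit e V r m (k + 1)).time < (relayHit e V r m k).time) (hk : k ≤ n) :
    (relayHit e V r m k).Pushes (m k) := by
  cases k with
  | zero => exact ⟨he, _, sub_pos.2 hV, rfl⟩
  | succ k => exact Hit.pushes_prev (ht k hk)

theorem relay_of_time_lt {m : ℕ → Motion E} (he : ‖e‖ = 1) (hV : ⟪(m 0).vel, e⟫ < V)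
    (ht : ∀ k < n, (relayHit e V r m (k + 1)).time < (relayHit e V r m k).time)
    (hgap : ∀ k < n, ∀ i j, i < j → j ≤ n → (i, j) ≠ (k, k + 1) →
      r < ⟪(relayPhase m (relayProj e V r m) (relayRecoil e V r m) k i).pos
          (relayHit e V r m k).time -
        (relayPhase m (relayProj e V r m) (relayRecoil e V r m) k j).pos
          (relayHit e V r m k).time, e⟫) :
    Relay e r n m (relayProj e V r m) (relayRecoil e V r m) fun k => (relayHit e V r m k).time where
  time_lt i j hij hj := by
    induction j, hij using Nat.le_induction with
    | base => exact ht i (i.lt_add_one.trans hj)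
    | succ j _ ih => exact (ht j (j.lt_add_one.trans hj)).trans (ih (j.lt_add_one.trans hj))
  collision k hk := ⟨_, Hit.collision (pushes_relayHit he hV ht hk.le) (ht k hk)⟩
  gap := hgap

/-- The velocities `V, c 0, c 1, …`. -/
def relayFinal (V : ℝ) (c : ℕ → ℝ) : ℕ → ℝ
  | 0 => V
  | k + 1 => c k

theorem strictAnti_relayFinal {c : ℕ → ℝ} (hc : StrictAnti c) (hV : c 0 < V) :
    StrictAnti (relayFinal V c) :=
  strictAnti_nat_of_succ_lt fun
    | 0 => hV
    | k + 1 => hc k.lt_add_one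

section Limits

variable {α : Type*} {l : Filter α} {r : α → ℝ} {m : α → ℕ → Motion E} {c : ℕ → ℝ}

theorem tendsto_relayHit (he : ‖e‖ = 1) (hc : StrictAnti c) (hV : c 0 < V)
    (hr : Tendsto r l (𝓝 0)) (hm : ∀ k, TendstoRay l (m · k) (c k) e) (k : ℕ) :
    Hit.TendstoHeadOn l (fun a => relayHit e V (r a) (m a) k) ((V - c 0) / (V - c k)) V e := by
  have hpos (k) : 0 < V - c k := sub_pos.2 ((hc.antitone k.zero_le).trans_lt hV)
  induction k with
  | zero =>
    have he' : Tendsto (fun _ => e) l (𝓝 e) := tendsto_const_nhds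
    have hvel := (hm 0).vel.add ((((hm 0).vel.inner (𝕜 := ℝ) he').const_sub V).smul he')
    rw [inner_smul_self_of_norm_eq_one he, ← add_smul, add_sub_cancel] at hvel
    rw [div_self (hpos 0).ne']
    exact ⟨tendsto_const_nhds, he', hvel⟩
  | succ k ih =>
    rw [← div_mul_cancel₀ (V - c 0) (hpos k).ne']
    exact ih.prev he hr (hm k) (hm (k + 1)) (hc k.lt_add_one) (sub_pos.1 (hpos k))
      (div_pos (hpos 0) (hpos k))

theorem tendstoRay_relayRecoil (he : ‖e‖ = 1) (hc : StrictAnti c) (hV : c 0 < V)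
    (hr : Tendsto r l (𝓝 0)) (hm : ∀ k, TendstoRay l (m · k) (c k) e) (k : ℕ) :
    TendstoRay l (fun a => relayRecoil e V (r a) (m a) k) (c k) e := by
  have hk := tendsto_relayHit he hc hV hr hm k
  have hvel := ((tendsto_relayHit he hc hV hr hm (k + 1)).vel.add (hm k).vel).sub hk.vel
  rw [add_sub_cancel_left] at hvel
  have horigin := (((hm k).pos hk.time).sub (hr.smul hk.normal)).sub (hk.time.smul hvel)
  rw [zero_smul, sub_zero, smul_smul, sub_self] at horigin
  exact ⟨horigin, hvel⟩

theorem tendsto_pos_relayProj (he : ‖e‖ = 1) (hc : StrictAnti c) (hV : c 0 < V)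
    (hr : Tendsto r l (𝓝 0)) (hm : ∀ k, TendstoRay l (m · k) (c k) e) {t : α → ℝ}
    (ht : Tendsto t l (𝓝 0)) (k : ℕ) :
    Tendsto (fun a => (relayProj e V (r a) (m a) k).pos (t a)) l (𝓝 ((c 0 - V) • e)) := by
  have hk := tendsto_relayHit he hc hV hr hm k
  have hne : V - c k ≠ 0 := (sub_pos.2 ((hc.antitone k.zero_le).trans_lt hV)).ne'
  have hpos := (((hm k).pos hk.time).sub (hk.time.smul hk.vel)).add (ht.smul hk.vel)
  rw [smul_smul, ← sub_smul, ← mul_sub, ← neg_sub V, mul_neg, div_mul_cancel₀ _ hne, neg_sub,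
    zero_smul, add_zero] at hpos
  exact hpos

theorem tendsto_pos_relayPhase (he : ‖e‖ = 1) (hc : StrictAnti c) (hV : c 0 < V)
    (hr : Tendsto r l (𝓝 0)) (hm : ∀ k, TendstoRay l (m · k) (c k) e) (k i : ℕ) :
    Tendsto (fun a => (relayPhase (m a) (relayProj e V (r a) (m a)) (relayRecoil e V (r a) (m a))
        k i).pos (relayHit e V (r a) (m a) k).time) l
      (𝓝 (((V - c 0) / (V - c k) * c (if i ≤ k then i else i - 1)) • e)) := by
  have hk := (tendsto_relayHit he hc hV hr hm k).time
  rcases lt_trichotomy i k with hi | rfl | hi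
  · simpa only [relayPhase, if_pos hi, if_pos hi.le] using (hm i).pos hk
  · simpa only [relayPhase_self, relayProj, Hit.after, pos_through, if_pos le_rfl]
      using (hm i).pos hk
  · simpa only [relayPhase, if_neg hi.not_gt, if_neg hi.ne', if_neg hi.not_ge]
      using (tendstoRay_relayRecoil he hc hV hr hm (i - 1)).pos hk

theorem eventually_relay (he : ‖e‖ = 1) (hc : StrictAnti c) (hV : c 0 < V)
    (hr : Tendsto r l (𝓝 0)) (hm : ∀ k, TendstoRay l (m · k) (c k) e) (n : ℕ) :
    ∀ᶠ a in l, Relay e (r a) n (m a) (relayProj e V (r a) (m a)) (relayRecoil e V (r a) (m a))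
      fun k => (relayHit e V (r a) (m a) k).time := by
  have hpos (k) : 0 < V - c k := sub_pos.2 ((hc.antitone k.zero_le).trans_lt hV)
  have hvel := (hm 0).vel.inner (𝕜 := ℝ) (tendsto_const_nhds (x := e))
  rw [inner_smul_self_of_norm_eq_one he] at hvel
  have htime : ∀ᶠ a in l, ∀ k ∈ Iio n,
      (relayHit e V (r a) (m a) (k + 1)).time < (relayHit e V (r a) (m a) k).time :=
    (eventually_all_finite (finite_Iio n)).2 fun k _ =>
      (tendsto_relayHit he hc hV hr hm (k + 1)).time.eventually_lt
        (tendsto_relayHit he hc hV hr hm k).time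
        (div_lt_div_of_pos_left (hpos 0) (hpos k) (sub_lt_sub_left (hc k.lt_add_one) V))
  have hgap : ∀ᶠ a in l, ∀ k ∈ Iio n, ∀ j ∈ Iic n, ∀ i ∈ Iio j, (i, j) ≠ (k, k + 1) →
      r a < ⟪(relayPhase (m a) (relayProj e V (r a) (m a)) (relayRecoil e V (r a) (m a)) k i).pos
          (relayHit e V (r a) (m a) k).time -
        (relayPhase (m a) (relayProj e V (r a) (m a)) (relayRecoil e V (r a) (m a)) k j).pos
          (relayHit e V (r a) (m a) k).time, e⟫ := by
    refine (eventually_all_finite (finite_Iio n)).2 fun k _ =>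
      (eventually_all_finite (finite_Iic n)).2 fun j _ =>
      (eventually_all_finite (finite_Iio j)).2 fun i (hij : i < j) => eventually_imp_distrib_left.2
      fun hpair => hr.eventually_lt (((tendsto_pos_relayPhase he hc hV hr hm k i).sub
        (tendsto_pos_relayPhase he hc hV hr hm k j)).inner (𝕜 := ℝ) tendsto_const_nhds) ?_
    rw [← sub_smul, inner_smul_self_of_norm_eq_one he, ← mul_sub]
    refine mul_pos (div_pos (hpos 0) (hpos k)) (sub_pos.2 (hc ?_))
    rw [Ne, Prod.mk.injEq] at hpair
    split_ifs <;> omega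
  filter_upwards [htime, hgap, hvel.eventually_lt_const hV] with a htime hgap hvel
  exact relay_of_time_lt he hvel htime fun k hk i j hij hj => hgap k hk j hj i hij

theorem eventually_relay_start (he : ‖e‖ = 1) (hc : StrictAnti c) (hV : c 0 < V)
    (hr : Tendsto r l (𝓝 0)) (hm : ∀ k, TendstoRay l (m · k) (c k) e) {t b : α → ℝ}
    (ht : Tendsto t l (𝓝 0)) (hb : Tendsto b l (𝓝 0)) (n : ℕ) :
    ∀ᶠ a in l, (∀ k < n, t a < (relayHit e V (r a) (m a) k).time) ∧
      ⟪(relayProj e V (r a) (m a) n).pos (t a), e⟫ < b a ∧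
      ∀ k < n, r a < ⟪(m a k).pos (t a) - (relayProj e V (r a) (m a) n).pos (t a), e⟫ := by
  have hpos (k) : 0 < V - c k := sub_pos.2 ((hc.antitone k.zero_le).trans_lt hV)
  have hn := tendsto_pos_relayProj he hc hV hr hm ht n
  have hn' := hn.inner (𝕜 := ℝ) (tendsto_const_nhds (x := e))
  rw [inner_smul_self_of_norm_eq_one he] at hn'
  refine .and ((eventually_all_finite (finite_Iio n)).2 fun k _ => ht.eventually_lt
    (tendsto_relayHit he hc hV hr hm k).time (div_pos (hpos 0) (hpos k))) (.and
    (hn'.eventually_lt hb (sub_neg.2 hV)) ((eventually_all_finite (finite_Iio n)).2 fun k _ =>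
      hr.eventually_lt ((((hm k).pos ht).sub hn).inner (𝕜 := ℝ) tendsto_const_nhds) ?_))
  rw [← sub_smul, inner_smul_self_of_norm_eq_one he]
  linarith

theorem tendsto_vel_relayPhase_zero (he : ‖e‖ = 1) (hc : StrictAnti c) (hV : c 0 < V)
    (hr : Tendsto r l (𝓝 0)) (hm : ∀ k, TendstoRay l (m · k) (c k) e) (i : ℕ) :
    Tendsto (fun a => (relayPhase (m a) (relayProj e V (r a) (m a)) (relayRecoil e V (r a) (m a))
      0 i).vel) l (𝓝 (relayFinal V c i • e)) :=
  match i with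
  | 0 => (tendsto_relayHit he hc hV hr hm 0).vel
  | k + 1 => (tendstoRay_relayRecoil he hc hV hr hm k).vel

theorem eventually_inner_vel_le (he : ‖e‖ = 1) (hc : StrictAnti c) (hV : c 0 < V)
    (hr : Tendsto r l (𝓝 0)) (hm : ∀ k, TendstoRay l (m · k) (c k) e) (n : ℕ) :
    ∀ᶠ a in l, ∀ i j, i < j → j ≤ n →
      ⟪(relayPhase (m a) (relayProj e V (r a) (m a)) (relayRecoil e V (r a) (m a)) 0 j).vel, e⟫ ≤
      ⟪(relayPhase (m a) (relayProj e V (r a) (m a)) (relayRecoil e V (r a) (m a))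
        0 i).vel, e⟫ := by
  have hvel (i) := (tendsto_vel_relayPhase_zero he hc hV hr hm i).inner (𝕜 := ℝ)
    (tendsto_const_nhds (x := e))
  simp only [inner_smul_self_of_norm_eq_one he] at hvel
  have hlt : ∀ᶠ a in l, ∀ j ∈ Iic n, ∀ i ∈ Iio j, _ :=
    (eventually_all_finite (finite_Iic n)).2 fun j _ =>
    (eventually_all_finite (finite_Iio j)).2 fun i hij =>
      (hvel j).eventually_lt (hvel i) (strictAnti_relayFinal hc hV hij)
  filter_upwards [hlt] with a ha i j hij hj using (ha j hj i hij).le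

end Limits

end RelayHit

noncomputable section Scale

variable {E : Type*} [NormedAddCommGroup E] [InnerProductSpace ℝ E]

/-- The image of a uniform motion under the dilation of space and time by the factor `T`. -/
def Motion.scale (T : ℝ) (m : Motion E) : Motion E := ⟨T • m.origin, m.vel⟩

theorem Motion.pos_scale (T t : ℝ) (m : Motion E) : (m.scale T).pos (T * t) = T • m.pos t := by
  rw [pos, pos, scale, smul_add, mul_smul]

theorem Collision.scale {r t : ℝ} {u : E} {p q p' q' : Motion E} (T : ℝ)
    (h : Collision r t u p q p' q') :
    Collision (T * r) (T * t) u (p.scale T) (q.scale T) (p'.scale T) (q'.scale T) where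
  norm_normal := h.norm_normal
  contact := by rw [pos_scale, pos_scale, ← smul_sub, h.contact, mul_smul]
  approach := h.approach
  pos_left := by rw [pos_scale, pos_scale, h.pos_left]
  pos_right := by rw [pos_scale, pos_scale, h.pos_right]
  vel_left := h.vel_left
  vel_right := h.vel_right

theorem relayPhase_comp {α β : Type*} (g : α → β) (m proj recoil : ℕ → α) (k i : ℕ) :
    relayPhase (g ∘ m) (g ∘ proj) (g ∘ recoil) k i = g (relayPhase m proj recoil k i) := by
  simp only [relayPhase, apply_ite g, Function.comp_apply]

theorem Relay.scale {e : E} {r : ℝ} {n : ℕ} {m proj recoil : ℕ → Motion E} {τ : ℕ → ℝ}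
    {T : ℝ} (hT : 0 < T) (h : Relay e r n m proj recoil τ) :
    Relay e (T * r) n (Motion.scale T ∘ m) (Motion.scale T ∘ proj) (Motion.scale T ∘ recoil)
      fun k => T * τ k where
  time_lt i j hij hj := mul_lt_mul_of_pos_left (h.time_lt i j hij hj) hT
  collision k hk := (h.collision k hk).imp fun _ => Collision.scale T
  gap k hk i j hij hj hpair := by
    rw [relayPhase_comp, relayPhase_comp, pos_scale, pos_scale, ← smul_sub, real_inner_smul_left]
    exact mul_lt_mul_of_pos_left (h.gap k hk i j hij hj hpair) hT

theorem exists_tendsto_inv_smul {F : Type*} [SeminormedAddCommGroup F] [NormedSpace ℝ F]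
    (x : ℕ → F) :
    ∃ T : ℕ → ℝ, (∀ l, 0 < T l) ∧ Tendsto (fun l => (T l)⁻¹) atTop (𝓝 0) ∧
      Tendsto (fun l => (T l)⁻¹ • x l) atTop (𝓝 0) := by
  have hlim := tendsto_one_div_add_atTop_nhds_zero_nat (𝕜 := ℝ)
  refine ⟨fun l => (l + 1) * (1 + ‖x l‖), fun l => by positivity,
    squeeze_zero (fun l => by positivity) (fun l => ?_) hlim,
    squeeze_zero_norm (fun l => ?_) hlim⟩
  · rw [one_div]
    gcongr
    exact le_mul_of_one_le_right (by positivity) (by simp)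
  · rw [norm_smul, Real.norm_of_nonneg (by positivity), mul_inv, mul_assoc, one_div]
    refine mul_le_of_le_one_right (by positivity) ?_
    rw [inv_mul_le_one₀ (by positivity)]
    simp

end Scale

section Map

variable {E F : Type*} [NormedAddCommGroup E] [InnerProductSpace ℝ E] [NormedAddCommGroup F]
  [InnerProductSpace ℝ F] {r t : ℝ} {u : E} {p q p' q' : Motion E}

/-- The image of a uniform motion under a linear isometry. -/
def Motion.map (φ : E →ₗᵢ[ℝ] F) (m : Motion E) : Motion F := ⟨φ m.origin, φ m.vel⟩

theorem Motion.vel_map (φ : E →ₗᵢ[ℝ] F) (m : Motion E) : (m.map φ).vel = φ m.vel := rfl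

theorem Motion.pos_map (φ : E →ₗᵢ[ℝ] F) (m : Motion E) (t : ℝ) :
    (m.map φ).pos t = φ (m.pos t) := by
  simp only [pos, map, map_add, map_smul]

theorem Motion.Separated.map {I : Set ℝ} (h : Separated r I p q) (φ : E →ₗᵢ[ℝ] F) :
    Separated r I (p.map φ) (q.map φ) := fun t ht => by
  simpa only [pos_map, ← map_sub, φ.norm_map] using h t ht

theorem Collision.map (h : Collision r t u p q p' q') (φ : E →ₗᵢ[ℝ] F) :
    Collision r t (φ u) (p.map φ) (q.map φ) (p'.map φ) (q'.map φ) where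
  norm_normal := by rw [φ.norm_map, h.norm_normal]
  contact := by rw [pos_map, pos_map, ← map_sub, h.contact, map_smul]
  approach := by simpa only [vel_map, ← map_sub, φ.inner_map_map] using h.approach
  pos_left := by rw [pos_map, pos_map, h.pos_left]
  pos_right := by rw [pos_map, pos_map, h.pos_right]
  vel_left := by
    rw [vel_map, h.vel_left, map_sub, map_smul, vel_map, vel_map, ← map_sub, φ.inner_map_map]
  vel_right := by
    rw [vel_map, h.vel_right, map_add, map_smul, vel_map, vel_map, ← map_sub, φ.inner_map_map]

theorem SystemCollision.map {ι : Type*} {i j : ι} {m m' : ι → Motion E}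
    (h : SystemCollision t u i j m m') (φ : E →ₗᵢ[ℝ] F) :
    SystemCollision t (φ u) i j (fun k => (m k).map φ) (fun k => (m' k).map φ) where
  collision := h.collision.map φ
  eq_of_ne k hi hj := by rw [h.eq_of_ne k hi hj]
  clear_left k hi hj := by
    simpa only [pos_map, ← map_sub, φ.norm_map] using h.clear_left k hi hj
  clear_right k hi hj := by
    simpa only [pos_map, ← map_sub, φ.norm_map] using h.clear_right k hi hj

end Map

section Aligned

variable {d n N : ℕ} {e : EuclideanSpace ℝ (Fin d)} {B : ℝ}

/-- The final velocities of the systems of `n` balls with at least `N` collisions, as in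
`Attains`. -/
def escapeVelocities (e : EuclideanSpace ℝ (Fin d)) (B : ℝ) (n N : ℕ) :
    Set (Fin n → EuclideanSpace ℝ (Fin d)) :=
  {v | ∃ (t : ℝ) (m : Fin n → Motion (EuclideanSpace ℝ (Fin d))), Attains e B N t m ∧
    Pairwise (Function.onFun (Separated 2 (Ici t)) m) ∧ ∀ i, (m i).vel = v i}

/-- There are systems of `n` balls with at least `N` collisions whose final velocities are
arbitrarily close to being aligned along `e` and ordered. -/
def ApproachesAligned (e : EuclideanSpace ℝ (Fin d)) (n N : ℕ) : Prop :=
  ∃ (c : ℕ → ℝ) (B : ℝ), StrictAnti c ∧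
    (fun i : Fin n => c i • e) ∈ closure (escapeVelocities e B n N)

theorem ApproachesAligned.exists_ballSystem (h : ApproachesAligned e n N) :
    ∃ S : BallSystem (Fin n) d univ, ∃ F : Finset (ℝ × Finset (Fin n)),
      ↑F ⊆ S.collisions ∧ F.card = N := by
  obtain ⟨c, B, -, hclosure⟩ := h
  obtain ⟨_, t, m, hm, hsep, -⟩ := closure_nonempty_iff.1 ⟨_, hclosure⟩
  exact hm.exists_ballSystem_univ hsep

theorem relayPhase_vel_mem_escapeVelocities {m proj recoil : ℕ → Motion (EuclideanSpace ℝ (Fin d))}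
    {τ : ℕ → ℝ} {t : ℝ} (he : ‖e‖ = 1) (h : Relay e 2 n m proj recoil τ)
    (hm : Attains e B N t (Fin.snoc (fun i : Fin n => m i) (proj n) : Fin (n + 1) → _))
    (hsep : Pairwise (Function.onFun (Separated 2 (Ici t)) fun i : Fin n => m i))
    (ht : ∀ k < n, t < τ k) (hgap : ∀ k < n, 2 < ⟪(m k).pos t - (proj n).pos t, e⟫)
    (hvel : ∀ i j, i < j → j ≤ n →
      ⟪(relayPhase m proj recoil 0 j).vel, e⟫ ≤ ⟪(relayPhase m proj recoil 0 i).vel, e⟫) :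
    (fun i : Fin (n + 1) => (relayPhase m proj recoil 0 i).vel) ∈
      escapeVelocities e B (n + 1) (N + n) := by
  have hphase : (Fin.snoc (fun i : Fin n => m i) (proj n) : Fin (n + 1) → _) =
      fun i : Fin (n + 1) => relayPhase m proj recoil n i :=
    funext <| Fin.lastCases (by simp [relayPhase_self]) fun i => by
      simp [relayPhase_of_lt _ _ _ i.is_lt]
  have hclear (i j) (hij : i < j) (hj : j ≤ n) :
      Clear e t (relayPhase m proj recoil n i) (relayPhase m proj recoil n j) := by
    rw [relayPhase_of_lt _ _ _ (hij.trans_le hj)]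
    rcases hj.eq_or_lt with rfl | hj
    · rw [relayPhase_self]
      exact .inr (hgap i hij)
    · rw [relayPhase_of_lt _ _ _ hj]
      exact .inl (hsep (i := ⟨i, hij.trans hj⟩) (j := ⟨j, hj⟩) (Fin.ne_of_lt hij))
  obtain ⟨s, -, hs, hclear'⟩ := h.attains he (hphase ▸ hm) ht hclear n.zero_le
  refine ⟨s, _, hs, (Std.Symm.pairwise_on _).2 fun i j hij => ?_, fun _ => rfl⟩
  refine (hclear' i j hij j.is_le).elim id fun hgap' => separated_Ici_of_lt_inner he hgap' ?_
  rw [inner_sub_left, sub_nonneg]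
  exact hvel i j hij j.is_le

theorem relayPhase_vel_mem_escapeVelocities_of_scale {t T : ℝ} {τ : ℕ → ℝ}
    {m proj recoil : ℕ → Motion (EuclideanSpace ℝ (Fin d))} (he : ‖e‖ = 1) (hT : 0 < T)
    (h : Relay e (T⁻¹ * 2) n m proj recoil τ)
    (hm : Attains e B N t
      (Fin.snoc (fun i : Fin n => (m i).scale T) ((proj n).scale T) : Fin (n + 1) → _))
    (hsep : Pairwise (Function.onFun (Separated 2 (Ici t)) fun i : Fin n => (m i).scale T))
    (ht : ∀ k < n, T⁻¹ * t < τ k)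
    (hgap : ∀ k < n, T⁻¹ * 2 < ⟪(m k).pos (T⁻¹ * t) - (proj n).pos (T⁻¹ * t), e⟫)
    (hvel : ∀ i j, i < j → j ≤ n →
      ⟪(relayPhase m proj recoil 0 j).vel, e⟫ ≤ ⟪(relayPhase m proj recoil 0 i).vel, e⟫) :
    (fun i : Fin (n + 1) => (relayPhase m proj recoil 0 i).vel) ∈
      escapeVelocities e B (n + 1) (N + n) := by
  have hvel_scale (i : ℕ) : (relayPhase m proj recoil 0 i).vel =
      (relayPhase (scale T ∘ m) (scale T ∘ proj) (scale T ∘ recoil) 0 i).vel := by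
    rw [relayPhase_comp, scale]
  have hrelay := h.scale hT
  rw [mul_inv_cancel_left₀ hT.ne'] at hrelay
  simp only [hvel_scale] at hvel ⊢
  refine relayPhase_vel_mem_escapeVelocities he hrelay hm hsep
    (fun k hk => (inv_mul_lt_iff₀ hT).1 (ht k hk)) (fun k hk => ?_) hvel
  rw [← mul_inv_cancel_left₀ hT.ne' t, Function.comp_apply, Function.comp_apply, pos_scale,
    pos_scale, ← smul_sub, real_inner_smul_left]
  exact (inv_mul_lt_iff₀ hT).1 (hgap k hk)

section Limits

variable {α : Type*} {l : Filter α} {T t A : α → ℝ} {c : ℕ → ℝ} {V : ℝ}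
  {m : α → ℕ → Motion (EuclideanSpace ℝ (Fin d))}

theorem exists_tendsto_mem_escapeVelocities (he : ‖e‖ = 1) (hc : StrictAnti c) (hV : c 0 < V)
    (hBV : B < V) (hT : ∀ a, 0 < T a) (hT' : Tendsto (fun a => (T a)⁻¹) l (𝓝 0))
    (ht : Tendsto (fun a => (T a)⁻¹ * t a) l (𝓝 0)) (hA : Tendsto (fun a => (T a)⁻¹ * A a) l (𝓝 0))
    (hm : ∀ k, TendstoRay l (m · k) (c k) e)
    (hattains : ∀ a q, B ≤ ⟪q.vel, e⟫ → ⟪q.vel, e⟫ ≤ V + 1 → ⟪q.pos (t a), e⟫ < A a →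
      Attains e (V + 1) N (t a)
        (Fin.snoc (fun i : Fin n => (m a i).scale (T a)) q : Fin (n + 1) → _))
    (hsep : ∀ a, Pairwise (Function.onFun (Separated 2 (Ici (t a)))
      fun i : Fin n => (m a i).scale (T a))) :
    ∃ w : α → Fin (n + 1) → EuclideanSpace ℝ (Fin d),
      Tendsto w l (𝓝 fun i => relayFinal V c i • e) ∧
      ∀ᶠ a in l, w a ∈ escapeVelocities e (V + 1) (n + 1) (N + n) := by
  have hr : Tendsto (fun a => (T a)⁻¹ * 2) l (𝓝 0) := by simpa using hT'.mul_const 2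
  refine ⟨_, tendsto_pi_nhds.2 fun i => tendsto_vel_relayPhase_zero he hc hV hr hm i, ?_⟩
  have hw := (tendsto_relayHit he hc hV hr hm n).vel.inner (𝕜 := ℝ) (tendsto_const_nhds (x := e))
  rw [inner_smul_self_of_norm_eq_one he] at hw
  filter_upwards [eventually_relay he hc hV hr hm n, eventually_relay_start he hc hV hr hm ht hA n,
    eventually_inner_vel_le he hc hV hr hm n, hw.eventually_const_le hBV,
    hw.eventually_le_const (lt_add_one V)] with a hrelay ⟨hstart, hrear, hgap⟩ hvel hwB hwV
  refine relayPhase_vel_mem_escapeVelocities_of_scale he (hT a) hrelay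
    (hattains a _ hwB hwV ?_) (hsep a) hstart hgap hvel
  rw [← mul_inv_cancel_left₀ (hT a).ne' (t a), pos_scale, real_inner_smul_left]
  exact (lt_inv_mul_iff₀ (hT a)).1 hrear

end Limits

theorem ApproachesAligned.succ (he : ‖e‖ = 1) (h : ApproachesAligned e n N) :
    ApproachesAligned e (n + 1) (N + n) := by
  obtain ⟨c, B, hc, hclosure⟩ := h
  obtain ⟨v, hv, hlim⟩ := mem_closure_iff_seq_limit.1 hclosure
  choose t m hattains hsep hvel using hv
  choose A hA using fun l => (hattains l).exists_snoc he
  obtain ⟨V, hcV, hBV⟩ : ∃ V, c 0 < V ∧ B < V := by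
    simpa only [max_lt_iff] using exists_gt (max (c 0) B)
  obtain ⟨T, hT, hT', hx⟩ :=
    exists_tendsto_inv_smul fun l => (t l, A l, fun i => (m l i).origin)
  let p (l k : ℕ) : Motion (EuclideanSpace ℝ (Fin d)) :=
    if hk : k < n then (m l ⟨k, hk⟩).scale (T l)⁻¹ else ⟨0, c k • e⟩
  have hp (l) : (fun i : Fin n => (p l i).scale (T l)) = m l := funext fun i => by
    simp only [p, i.is_lt, dite_true, scale, smul_inv_smul₀ (hT l).ne']
  have hray (k) : TendstoRay atTop (p · k) (c k) e := by
    by_cases hk : k < n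
    · simp only [p, dif_pos hk, scale]
      refine ⟨((continuous_apply (⟨k, hk⟩ : Fin n)).comp
        (continuous_snd.comp continuous_snd)).tendsto _ |>.comp hx, ?_⟩
      simpa only [hvel] using tendsto_pi_nhds.1 hlim ⟨k, hk⟩
    · simp only [p, dif_neg hk]
      exact ⟨tendsto_const_nhds, tendsto_const_nhds⟩
  obtain ⟨w, hw, hmem⟩ := exists_tendsto_mem_escapeVelocities he hc hcV hBV hT hT'
    ((continuous_fst.tendsto _).comp hx)
    (((continuous_fst.comp continuous_snd).tendsto _).comp hx) hray
    (fun l q => by rw [hp]; exact hA l (V + 1) q) (fun l => by rw [hp]; exact hsep l)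
  exact ⟨relayFinal V c, V + 1, strictAnti_relayFinal hc hcV, mem_closure_of_tendsto hw hmem⟩

end Aligned

section ThreeBalls

theorem pairwise_onFun_fin_three {α : Type*} {R : α → α → Prop} [Std.Symm R] {m : Fin 3 → α}
    (h₀₁ : R (m 0) (m 1)) (h₀₂ : R (m 0) (m 2)) (h₁₂ : R (m 1) (m 2)) :
    Pairwise (Function.onFun R m) := by
  refine (Std.Symm.pairwise_on m).2 fun i j hij => ?_
  fin_cases i <;> fin_cases j <;> first | assumption | exact absurd hij (by decide)

/-- The uniform motion in the plane with position `x + y i` at time `0` and velocity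
`a + b i`. -/
def planarMotion (x y a b : ℝ) : Motion ℂ := ⟨⟨x, y⟩, ⟨a, b⟩⟩

section PlanarMotion

variable {t r x y a b x' y' a' b' : ℝ}

theorem planarMotion_pos_sub_pos :
    (planarMotion x y a b).pos t - (planarMotion x' y' a' b').pos t =
      ⟨x - x' + t * (a - a'), y - y' + t * (b - b')⟩ := by
  simp only [Motion.pos, planarMotion]
  apply Complex.ext <;>
    simp only [Complex.add_re, Complex.add_im, Complex.sub_re, Complex.sub_im, Complex.smul_re,
      Complex.smul_im, smul_eq_mul] <;>
    ring

theorem planarMotion_vel_sub_vel :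
    (planarMotion x y a b).vel - (planarMotion x' y' a' b').vel = ⟨a - a', b - b'⟩ := rfl

theorem inner_complex_mk : ⟪(⟨x, y⟩ : ℂ), ⟨a, b⟩⟫ = x * a + y * b := by
  simp only [Complex.inner, Complex.mul_re, Complex.conj_re, Complex.conj_im]
  ring

theorem inner_planarMotion_sub :
    ⟪(planarMotion x y a b).pos t - (planarMotion x' y' a' b').pos t,
      (planarMotion x y a b).vel - (planarMotion x' y' a' b').vel⟫ =
      (x - x' + t * (a - a')) * (a - a') + (y - y' + t * (b - b')) * (b - b') := by
  rw [planarMotion_pos_sub_pos, planarMotion_vel_sub_vel, inner_complex_mk]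

theorem lt_norm_planarMotion_sub (hr : 0 ≤ r)
    (h : r ^ 2 < (x - x' + t * (a - a')) ^ 2 + (y - y' + t * (b - b')) ^ 2) :
    r < ‖(planarMotion x y a b).pos t - (planarMotion x' y' a' b').pos t‖ := by
  rw [planarMotion_pos_sub_pos, Complex.norm_def, Complex.normSq_mk, Real.lt_sqrt hr]
  linarith

theorem norm_planarMotion_sub_le (hr : 0 ≤ r)
    (h : (x - x' + t * (a - a')) ^ 2 + (y - y' + t * (b - b')) ^ 2 ≤ r ^ 2) :
    ‖(planarMotion x y a b).pos t - (planarMotion x' y' a' b').pos t‖ ≤ r := by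
  rw [planarMotion_pos_sub_pos, Complex.norm_def, Complex.normSq_mk, Real.sqrt_le_iff]
  exact ⟨hr, by linarith⟩

theorem vel_planarMotion_zero : (planarMotion x y a 0).vel = a • (1 : ℂ) := by
  apply Complex.ext <;> simp [planarMotion]

theorem collision_planarMotion {x₁ y₁ a₁ b₁ x₁' y₁' a₁' b₁' u v : ℝ} (hu : u ^ 2 + v ^ 2 = 1)
    (hx : x' + t * a' - (x + t * a) = r * u) (hy : y' + t * b' - (y + t * b) = r * v)
    (happroach : 0 < (a - a') * u + (b - b') * v)
    (hx₁ : x₁ + t * a₁ = x + t * a) (hy₁ : y₁ + t * b₁ = y + t * b)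
    (hx₁' : x₁' + t * a₁' = x' + t * a') (hy₁' : y₁' + t * b₁' = y' + t * b')
    (ha : a₁ = a - ((a - a') * u + (b - b') * v) * u)
    (hb : b₁ = b - ((a - a') * u + (b - b') * v) * v)
    (ha' : a₁' = a' + ((a - a') * u + (b - b') * v) * u)
    (hb' : b₁' = b' + ((a - a') * u + (b - b') * v) * v) :
    Collision r t ⟨u, v⟩ (planarMotion x y a b) (planarMotion x' y' a' b')
      (planarMotion x₁ y₁ a₁ b₁) (planarMotion x₁' y₁' a₁' b₁') where
  norm_normal := by
    rw [Complex.norm_def, Complex.normSq_mk, ← sq, ← sq, hu, Real.sqrt_one]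
  contact := by
    rw [planarMotion_pos_sub_pos]
    apply Complex.ext <;> simp only [Complex.smul_re, Complex.smul_im, smul_eq_mul] <;> linarith
  approach := by rwa [planarMotion_vel_sub_vel, inner_complex_mk]
  pos_left := by apply Complex.ext <;> simpa [Motion.pos, planarMotion]
  pos_right := by apply Complex.ext <;> simpa [Motion.pos, planarMotion]
  vel_left := by
    rw [planarMotion_vel_sub_vel, inner_complex_mk]
    apply Complex.ext <;> simpa [planarMotion]
  vel_right := by
    rw [planarMotion_vel_sub_vel, inner_complex_mk]
    apply Complex.ext <;> simpa [planarMotion]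

theorem separated_Ici_planarMotion (hr : 0 ≤ r)
    (h : r ^ 2 < (x - x' + t * (a - a')) ^ 2 + (y - y' + t * (b - b')) ^ 2)
    (hvel : 0 ≤ (x - x' + t * (a - a')) * (a - a') + (y - y' + t * (b - b')) * (b - b')) :
    Separated r (Ici t) (planarMotion x y a b) (planarMotion x' y' a' b') :=
  separated_Ici_of_le_norm (lt_norm_planarMotion_sub hr h).le (by rwa [inner_planarMotion_sub])

theorem separated_Iic_planarMotion (hr : 0 ≤ r)
    (h : r ^ 2 < (x - x' + t * (a - a')) ^ 2 + (y - y' + t * (b - b')) ^ 2)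
    (hvel : (x - x' + t * (a - a')) * (a - a') + (y - y' + t * (b - b')) * (b - b') ≤ 0) :
    Separated r (Iic t) (planarMotion x y a b) (planarMotion x' y' a' b') :=
  separated_Iic_of_le_norm (lt_norm_planarMotion_sub hr h).le (by rwa [inner_planarMotion_sub])

theorem Collision.separated_Iic_planarMotion {u : ℂ} {c x'' y'' a'' b'' : ℝ} {p q : Motion ℂ}
    (h : Collision c t u p q (planarMotion x y a b) (planarMotion x' y' a' b'))
    (hgap : r < y - y'' + t * (b - b'')) (hb : b ≤ b'')
    (hvel : (a - a') ^ 2 + (b - b') ^ 2 ≤ (b'' - b) ^ 2) :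
    Separated r (Iic t) p (planarMotion x'' y'' a'' b'') := by
  refine h.separated_Iic_of_norm_le Complex.norm_I ?_ ?_
  · simpa [planarMotion_pos_sub_pos, Complex.inner] using hgap
  · rw [planarMotion_vel_sub_vel, planarMotion_vel_sub_vel, Complex.norm_def, Complex.normSq_mk,
      Real.sqrt_le_iff]
    simpa [Complex.inner, hb, ← sq] using hvel

end PlanarMotion

/-- The motions of three balls after each of their four collisions. They are computed backwards
from the final velocities, which are aligned, the normals of the last three collisions having
rational coordinates. -/
noncomputable def threeBalls : Fin 4 → Fin 3 → Motion ℂ :=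
  ![![planarMotion (6 / 5) (8 / 5) (25754 / 104975) (-7128 / 104975),
      planarMotion (13264 / 20995) (4376 / 1235) (436 / 4199) (-360 / 4199),
      planarMotion 0 0 (12096 / 104975) (16128 / 104975)],
    ![planarMotion (6 / 5) (8 / 5) (1280 / 4199) (48 / 4199),
      planarMotion (13264 / 20995) (4376 / 1235) (436 / 4199) (-360 / 4199),
      planarMotion 0 0 (18 / 323) (24 / 323)],
    ![planarMotion (25094 / 20995) (33832 / 20995) (100 / 323) 0,
      planarMotion (1028 / 1615) (5704 / 1615) (32 / 323) (-24 / 323),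
      planarMotion 0 0 (18 / 323) (24 / 323)],
    ![planarMotion (25094 / 20995) (33832 / 20995) (100 / 323) 0,
      planarMotion (-142 / 1615) (4144 / 1615) (50 / 323) 0,
      planarMotion (234 / 323) (312 / 323) 0 0]]

theorem systemCollision_threeBalls_one :
    SystemCollision 0 ⟨3 / 5, 4 / 5⟩ 2 0 (threeBalls 0) (threeBalls 1) := by
  refine .of_forall_eq (k := 1) (by decide) ?_ rfl ?_ ?_
  · apply collision_planarMotion <;> norm_num
  · apply lt_norm_planarMotion_sub <;> norm_num
  · apply lt_norm_planarMotion_sub <;> norm_num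

theorem systemCollision_threeBalls_two :
    SystemCollision 1 ⟨5 / 13, -12 / 13⟩ 1 0 (threeBalls 1) (threeBalls 2) := by
  refine .of_forall_eq (k := 2) (by decide) ?_ rfl ?_ ?_
  · apply collision_planarMotion <;> norm_num
  · apply lt_norm_planarMotion_sub <;> norm_num
  · apply lt_norm_planarMotion_sub <;> norm_num

theorem systemCollision_threeBalls_three :
    SystemCollision 13 ⟨3 / 5, 4 / 5⟩ 2 1 (threeBalls 2) (threeBalls 3) := by
  refine .of_forall_eq (k := 0) (by decide) ?_ rfl ?_ ?_
  · apply collision_planarMotion <;> norm_num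
  · apply lt_norm_planarMotion_sub <;> norm_num
  · apply lt_norm_planarMotion_sub <;> norm_num

theorem exists_norm_threeBalls_zero_sub_one_eq_two : ∃ T ∈ Icc (-1.9 : ℝ) (-1.81),
    ‖(threeBalls 0 0).pos T - (threeBalls 0 1).pos T‖ = 2 := by
  have hcont : Continuous fun t => ‖(threeBalls 0 0).pos t - (threeBalls 0 1).pos t‖ :=
    ((continuous_pos _).sub (continuous_pos _)).norm
  refine intermediate_value_Icc (by norm_num) hcont.continuousOn ⟨?_, le_of_lt ?_⟩
  · apply norm_planarMotion_sub_le <;> norm_num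
  · apply lt_norm_planarMotion_sub <;> norm_num

theorem exists_systemCollision_threeBalls_zero : ∃ T < 0, ∃ u m,
    SystemCollision T u 1 0 m (threeBalls 0) ∧
      Pairwise (Function.onFun (Separated 2 (Iic T)) m) := by
  obtain ⟨T, ⟨hT₀, hT₁⟩, hdist⟩ := exists_norm_threeBalls_zero_sub_one_eq_two
  obtain ⟨u, p, q, h⟩ : ∃ u p q, Collision 2 T u p q (threeBalls 0 1) (threeBalls 0 0) := by
    refine Collision.exists_of_separating two_pos (by rwa [norm_sub_rev]) ?_
    refine lt_of_lt_of_eq ?_ inner_planarMotion_sub.symm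
    linarith
  refine ⟨T, by linarith, u, ![q, p, threeBalls 0 2],
    .of_forall_eq (k := 2) (by decide) h rfl ?_ ?_, pairwise_onFun_fin_three ?_ ?_ ?_⟩
  · change 2 < ‖p.pos T - _‖
    rw [← h.pos_left]
    apply lt_norm_planarMotion_sub two_pos.le
    nlinarith
  · change 2 < ‖q.pos T - _‖
    rw [← h.pos_right]
    apply lt_norm_planarMotion_sub two_pos.le
    nlinarith
  · exact h.symm.separated_before two_pos.le
  · refine h.symm.separated_Iic_planarMotion ?_ (by norm_num) (by norm_num)
    linarith
  · refine h.separated_Iic_planarMotion ?_ (by norm_num) (by norm_num)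
    linarith

theorem separated_Icc_threeBalls_zero {T : ℝ} {u : ℂ} {m : Fin 3 → Motion ℂ}
    (h : SystemCollision T u 1 0 m (threeBalls 0)) :
    Pairwise (Function.onFun (Separated 2 (Icc T 0)) (threeBalls 0)) := by
  have hfree : Separated 2 (Iic 0) (threeBalls 0 1) (threeBalls 0 2) := by
    apply separated_Iic_planarMotion <;> norm_num
  exact pairwise_onFun_fin_three
    ((h.collision.symm.separated_after two_pos.le).mono Icc_subset_Ici_self)
    ((systemCollision_threeBalls_one.collision.symm.separated_before two_pos.le).mono
      Icc_subset_Iic_self)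
    (hfree.mono Icc_subset_Iic_self)

theorem separated_Icc_threeBalls_one :
    Pairwise (Function.onFun (Separated 2 (Icc 0 1)) (threeBalls 1)) := by
  have hfree : Separated 2 (Iic 1) (threeBalls 1 1) (threeBalls 1 2) := by
    apply separated_Iic_planarMotion <;> norm_num
  exact pairwise_onFun_fin_three
    ((systemCollision_threeBalls_two.collision.symm.separated_before two_pos.le).mono
      Icc_subset_Iic_self)
    ((systemCollision_threeBalls_one.collision.symm.separated_after two_pos.le).mono
      Icc_subset_Ici_self)
    (hfree.mono Icc_subset_Iic_self)

theorem separated_Icc_threeBalls_two :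
    Pairwise (Function.onFun (Separated 2 (Icc 1 13)) (threeBalls 2)) := by
  have hfree : Separated 2 (Ici 1) (threeBalls 2 0) (threeBalls 2 2) := by
    apply separated_Ici_planarMotion <;> norm_num
  exact pairwise_onFun_fin_three
    ((systemCollision_threeBalls_two.collision.symm.separated_after two_pos.le).mono
      Icc_subset_Ici_self)
    (hfree.mono Icc_subset_Ici_self)
    ((systemCollision_threeBalls_three.collision.symm.separated_before two_pos.le).mono
      Icc_subset_Iic_self)

theorem separated_Ici_threeBalls_three :
    Pairwise (Function.onFun (Separated 2 (Ici 13)) (threeBalls 3)) :=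
  pairwise_onFun_fin_three
    (by apply separated_Ici_planarMotion <;> norm_num)
    (by apply separated_Ici_planarMotion <;> norm_num)
    (systemCollision_threeBalls_three.collision.symm.separated_after two_pos.le)

theorem vel_threeBalls_three (i : Fin 3) :
    (threeBalls 3 i).vel = (50 / 323 * (2 - i) : ℝ) • (1 : ℂ) := by
  fin_cases i <;> refine vel_planarMotion_zero.trans ?_ <;> norm_num

theorem approachesAligned_three {d : ℕ} (φ : ℂ →ₗᵢ[ℝ] EuclideanSpace ℝ (Fin d)) :
    ApproachesAligned (φ 1) 3 4 := by
  obtain ⟨T, hT, u, m, hm, hsep⟩ := exists_systemCollision_threeBalls_zero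
  obtain ⟨B, hB⟩ := (finite_range fun i => ⟪((m i).map φ).vel, φ 1⟫).bddAbove
  have hmap {I J : Set ℝ} (hIJ : I ⊆ J) {m : Fin 3 → Motion ℂ}
      (h : Pairwise (Function.onFun (Separated 2 J) m)) :
      Pairwise (Function.onFun (Separated 2 I) fun i => (m i).map φ) :=
    h.mono fun _ _ h => (h.mono hIJ).map φ
  have h₀ : Attains (φ 1) B 0 (T - 1) fun i => (m i).map φ :=
    .of_separated (hmap (Iic_subset_Iic.2 (sub_le_self T one_pos.le)) hsep)
      fun i => hB (mem_range_self i)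
  have h₄ : Attains (φ 1) B 4 13 fun i => (threeBalls 3 i).map φ :=
    h₀.collide (sub_one_lt T) (hm.map φ) (hmap Icc_subset_Iic_self hsep)
    |>.collide hT (systemCollision_threeBalls_one.map φ)
      (hmap subset_rfl (separated_Icc_threeBalls_zero hm))
    |>.collide one_pos (systemCollision_threeBalls_two.map φ)
      (hmap subset_rfl separated_Icc_threeBalls_one)
    |>.collide (by norm_num) (systemCollision_threeBalls_three.map φ)
      (hmap subset_rfl separated_Icc_threeBalls_two)
  refine ⟨fun k => 50 / 323 * (2 - k), B, fun i j hij => ?_, subset_closure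
    ⟨13, _, h₄, hmap subset_rfl separated_Ici_threeBalls_three, fun i => ?_⟩⟩
  · have : (i : ℝ) < j := mod_cast hij
    linarith
  · rw [vel_map, vel_threeBalls_three, map_smul]

end ThreeBalls

theorem approachesAligned_choose_two_add_one {d n : ℕ}
    (φ : ℂ →ₗᵢ[ℝ] EuclideanSpace ℝ (Fin d)) (hn : 3 ≤ n) :
    ApproachesAligned (φ 1) n (n.choose 2 + 1) := by
  induction n, hn using Nat.le_induction with
  | base => exact approachesAligned_three φ
  | succ n _ ih =>
    have hφ : ‖φ 1‖ = 1 := by rw [φ.norm_map, norm_one]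
    rw [Nat.choose_succ_succ' n 1, Nat.choose_one_right, add_comm n (n.choose _), add_right_comm]
    exact ih.succ hφ

theorem nonempty_complex_linearIsometry_euclideanSpace {d : ℕ} (hd : 2 ≤ d) :
    Nonempty (ℂ →ₗᵢ[ℝ] EuclideanSpace ℝ (Fin d)) := by
  let b := Complex.orthonormalBasisOneI
  let v := EuclideanSpace.basisFun (Fin d) ℝ ∘ Fin.castLE hd
  have hv : Orthonormal ℝ v :=
    (EuclideanSpace.basisFun (Fin d) ℝ).orthonormal.comp _ (Fin.castLE_injective hd)
  have hb : Orthonormal ℝ b.toBasis := by simpa only [b.coe_toBasis] using b.orthonormal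
  refine ⟨(b.toBasis.constr ℝ v).isometryOfOrthonormal hb ?_⟩
  rwa [show b.toBasis.constr ℝ v ∘ b.toBasis = v from funext (b.toBasis.constr_basis ℝ v)]

/-- For every `n ≥ 3` and `d ≥ 2` there is an elastic collision system
of `n` unit balls in `ℝ^d`, on the time interval `ℝ`, with strictly more than
`n(n-1)/2` collisions. -/
theorem ball_collisions_gt_binom (n d : ℕ) (hn : 3 ≤ n) (hd : 2 ≤ d) :
    ∃ S : BallSystem (Fin n) d Set.univ, ∃ F : Finset (ℝ × Finset (Fin n)),
      ↑F ⊆ S.collisions ∧ n * (n - 1) / 2 < F.card := by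
  obtain ⟨φ⟩ := nonempty_complex_linearIsometry_euclideanSpace hd
  obtain ⟨S, F, hF, hcard⟩ := (approachesAligned_choose_two_add_one φ hn).exists_ballSystem
  refine ⟨S, F, hF, ?_⟩
  rw [hcard, ← Nat.choose_two_right]
  exact Nat.lt_succ_self _
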